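/- arXiv:2411.02918 — 2 statements merged into one kernel-verified Lean document; each statement's English description precedes it below -/
import Mathlib

section
/- Let n ≥ 4 be even and let G be a unicyclic graph of order n. Then φ(G) = ⌊n/2⌋ + 2 if and only if G is isomorphic to U((n-2)/2, (n-4)/2), or n = 6 and G is isomorphic to one of U_{6,0} (the 6-cycle) or U_{5,1}, or n = 8 and G is isomorphic to U_{4,4}. -/
open SimpleGraph

/-- A dissociation set: a set of vertices inducing a subgraph of maximum degree at most 1,
i.e., every vertex of `S` has at most one neighbour inside `S`. -/
def IsDissoc {V : Type*} (G : SimpleGraph V) (S : Set V) : Prop :=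
  ∀ v ∈ S, {u | u ∈ S ∧ G.Adj v u}.Subsingleton

/-- A maximal dissociation set: a dissociation set not properly contained in another one. -/
def IsMaxDissoc {V : Type*} (G : SimpleGraph V) (S : Set V) : Prop :=
  IsDissoc G S ∧ ∀ T : Set V, IsDissoc G T → S ⊆ T → S = T

/-- `phi G` is the number of maximal dissociation sets of `G`. -/
noncomputable def phi {V : Type*} (G : SimpleGraph V) : ℕ :=
  {S : Set V | IsMaxDissoc G S}.ncard

/-- The number of maximal dissociation sets of `G` not containing `u`. -/
noncomputable def phiNot {V : Type*} (G : SimpleGraph V) (u : V) : ℕ :=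
  {S : Set V | IsMaxDissoc G S ∧ u ∉ S}.ncard

/-- The number of maximal dissociation sets `S` of `G` with `u ∈ S` and
`u` of degree 0 in the subgraph induced by `S`. -/
noncomputable def phi0 {V : Type*} (G : SimpleGraph V) (u : V) : ℕ :=
  {S : Set V | IsMaxDissoc G S ∧ u ∈ S ∧ ∀ x ∈ S, ¬ G.Adj u x}.ncard

/-- The number of maximal dissociation sets `S` of `G` with `u ∈ S` and
`u` of degree 1 in the subgraph induced by `S`. -/
noncomputable def phi1 {V : Type*} (G : SimpleGraph V) (u : V) : ℕ :=
  {S : Set V | IsMaxDissoc G S ∧ u ∈ S ∧ ∃! x, x ∈ S ∧ G.Adj u x}.ncard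

/-- A unicyclic graph: a connected graph whose number of edges equals its number of vertices
(equivalently, a connected graph with exactly one cycle). -/
def IsUnicyclic {V : Type*} [Fintype V] (G : SimpleGraph V) : Prop :=
  G.Connected ∧ G.edgeSet.ncard = Fintype.card V

/-- The tree `T(p,q)` (for `q ≤ p`): obtained from the star `K_{1,p}` by subdividing
exactly `q` of its edges.  The centre is `Sum.inl ()`, the `p` neighbours of the centre are
`Sum.inr (Sum.inl i)`, and for `j < q` the vertex `Sum.inr (Sum.inr j)` is the subdivision
pendant attached to the `j`-th neighbour.  It has `1 + p + q` vertices. -/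
def treeT (p q : ℕ) (h : q ≤ p) : SimpleGraph (Unit ⊕ Fin p ⊕ Fin q) :=
  SimpleGraph.fromRel fun a b =>
    (∃ i : Fin p, a = Sum.inl () ∧ b = Sum.inr (Sum.inl i)) ∨
    (∃ j : Fin q, a = Sum.inr (Sum.inl (Fin.castLE h j)) ∧ b = Sum.inr (Sum.inr j))

/-- The unicyclic graph `U(p,q)` (for `q ≤ p`): obtained by identifying one vertex of the
triangle `K₃` with the centre of `T(p,q)`.  The centre is `Sum.inl ()`, the two other triangle
vertices are `Sum.inr (Sum.inl 0)` and `Sum.inr (Sum.inl 1)`, and the copy of `T(p,q)` sits on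
the remaining vertices.  It has `3 + p + q` vertices. -/
def graphU (p q : ℕ) (h : q ≤ p) : SimpleGraph (Unit ⊕ Fin 2 ⊕ Fin p ⊕ Fin q) :=
  SimpleGraph.fromRel fun a b =>
    (a = Sum.inl () ∧ b = Sum.inr (Sum.inl 0)) ∨
    (a = Sum.inl () ∧ b = Sum.inr (Sum.inl 1)) ∨
    (a = Sum.inr (Sum.inl 0) ∧ b = Sum.inr (Sum.inl 1)) ∨
    (∃ i : Fin p, a = Sum.inl () ∧ b = Sum.inr (Sum.inr (Sum.inl i))) ∨
    (∃ j : Fin q, a = Sum.inr (Sum.inr (Sum.inl (Fin.castLE h j))) ∧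
      b = Sum.inr (Sum.inr (Sum.inr j)))

/-- The unicyclic graph obtained from the cycle `C_r` by attaching one pendant vertex
`Sum.inr j` to the cycle vertex `Sum.inl (f j)` for each `j : Fin t`.  For injective `f`
this is a member of the class `𝒰_{r,t}`. -/
def graphUrtF (r t : ℕ) (f : Fin t → Fin r) : SimpleGraph (Fin r ⊕ Fin t) :=
  SimpleGraph.fromRel fun a b =>
    (∃ i j : Fin r, a = Sum.inl i ∧ b = Sum.inl j ∧ (cycleGraph r).Adj i j) ∨
    (∃ j : Fin t, a = Sum.inl (f j) ∧ b = Sum.inr j)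

/-- The canonical member `U_{r,t}` of `𝒰_{r,t}` (for `t ≤ r`): the cycle `C_r` with one
pendant vertex attached to each of its first `t` vertices. -/
def graphUrt (r t : ℕ) (h : t ≤ r) : SimpleGraph (Fin r ⊕ Fin t) :=
  graphUrtF r t (Fin.castLE h)

/-- A caterpillar: a tree in which deleting all vertices of degree 1 leaves a path. -/
def IsCaterpillar {V : Type*} [Fintype V] (G : SimpleGraph V) : Prop :=
  G.IsTree ∧ ∃ m : ℕ,
    Nonempty ((G.induce {v | 2 ≤ (G.neighborSet v).ncard}) ≃g SimpleGraph.pathGraph m)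

/-- The graph `G₁` obtained from `U` by adding `k` new pendant vertices
`v₁ = Sum.inr 0, …, v_k = Sum.inr (k-1)`, each adjacent to `w`. -/
def addPendants {V : Type*} (U : SimpleGraph V) (w : V) (k : ℕ) : SimpleGraph (V ⊕ Fin k) :=
  SimpleGraph.fromRel fun a b =>
    (∃ x y, a = Sum.inl x ∧ b = Sum.inl y ∧ U.Adj x y) ∨
    (∃ j : Fin k, a = Sum.inl w ∧ b = Sum.inr j)

/-- The graph `G₂ = G₁ - w v_k + v₁ v_k`: obtained from `U` by attaching the pendant vertices
`v₁, …, v_{k-1}` to `w` and the vertex `v_k` to `v₁`. -/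
def swapPendant {V : Type*} (U : SimpleGraph V) (w : V) (k : ℕ) : SimpleGraph (V ⊕ Fin k) :=
  SimpleGraph.fromRel fun a b =>
    (∃ x y, a = Sum.inl x ∧ b = Sum.inl y ∧ U.Adj x y) ∨
    (∃ j : Fin k, j.val < k - 1 ∧ a = Sum.inl w ∧ b = Sum.inr j) ∨
    (∃ j₀ j₁ : Fin k, j₀.val = 0 ∧ j₁.val = k - 1 ∧ a = Sum.inr j₀ ∧ b = Sum.inr j₁)

/-- The graph obtained from `H` by attaching a pendant path of length 2 at `w`:
two new vertices `v = Sum.inr 0` and `u = Sum.inr 1` with edges `w v` and `v u`. -/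
def addPath2 {V : Type*} (H : SimpleGraph V) (w : V) : SimpleGraph (V ⊕ Fin 2) :=
  SimpleGraph.fromRel fun a b =>
    (∃ x y, a = Sum.inl x ∧ b = Sum.inl y ∧ H.Adj x y) ∨
    (a = Sum.inl w ∧ b = Sum.inr 0) ∨
    (a = Sum.inr 0 ∧ b = Sum.inr 1)

section DissociationSets

variable {V W : Type*}

theorem IsDissoc.mono {G : SimpleGraph V} {S T : Set V} (hT : IsDissoc G T) (h : S ⊆ T) :
    IsDissoc G S :=
  fun v hv => (hT v (h hv)).anti fun _ hu => ⟨h hu.1, hu.2⟩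

theorem IsDissoc.eq_of_adj {G : SimpleGraph V} {S : Set V} (hS : IsDissoc G S) {a b c : V}
    (ha : a ∈ S) (hb : b ∈ S) (hc : c ∈ S) (hab : G.Adj a b) (hac : G.Adj a c) : b = c :=
  hS a ha ⟨hb, hab⟩ ⟨hc, hac⟩

theorem IsDissoc.exists_isMaxDissoc_superset [Finite V] {G : SimpleGraph V} {S : Set V}
    (hS : IsDissoc G S) : ∃ T, IsMaxDissoc G T ∧ S ⊆ T := by
  obtain ⟨T, hST, hT⟩ := (Set.toFinite {T : Set V | IsDissoc G T}).exists_le_maximal hS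
  exact ⟨T, ⟨hT.prop, fun U hU hTU => hT.eq_of_le hU hTU⟩, hST⟩

theorem isMaxDissoc_iff {G : SimpleGraph V} {S : Set V} :
    IsMaxDissoc G S ↔ IsDissoc G S ∧ ∀ x ∉ S, ¬ IsDissoc G (insert x S) := by
  refine ⟨fun h => ⟨h.1, fun x hx hd => hx ?_⟩, fun h => ⟨h.1, fun T hT hST => ?_⟩⟩
  · rw [h.2 _ hd (Set.subset_insert x S)]
    exact Set.mem_insert x S
  · refine hST.antisymm fun x hx => ?_
    by_contra hxS
    exact h.2 x hxS (hT.mono (Set.insert_subset hx hST))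

theorem isDissoc_preimage {H : SimpleGraph W} {G : SimpleGraph V} (f : H ↪g G) {S : Set V}
    (hS : IsDissoc G S) : IsDissoc H (f ⁻¹' S) := fun _ hv _ ha _ hb =>
  f.injective (hS.eq_of_adj hv ha.1 hb.1 (f.map_rel_iff.2 ha.2) (f.map_rel_iff.2 hb.2))

theorem isDissoc_image {H : SimpleGraph W} {G : SimpleGraph V} (f : H ↪g G) {S : Set W}
    (hS : IsDissoc H S) : IsDissoc G (f '' S) := by
  rintro _ ⟨v, hv, rfl⟩ _ ⟨⟨a, ha, rfl⟩, hva⟩ _ ⟨⟨b, hb, rfl⟩, hvb⟩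
  exact congrArg f (hS.eq_of_adj hv ha hb (f.map_rel_iff.1 hva) (f.map_rel_iff.1 hvb))

/-- A dissociation set whose trace contains a maximal dissociation set has that set as trace. -/
theorem IsMaxDissoc.preimage_eq {H : SimpleGraph W} {G : SimpleGraph V} (f : H ↪g G) {S : Set W}
    {T : Set V} (hS : IsMaxDissoc H S) (hT : IsDissoc G T) (h : f '' S ⊆ T) : f ⁻¹' T = S :=
  (hS.2 _ (isDissoc_preimage f hT) (Set.image_subset_iff.1 h)).symm

theorem phi_le_of_embedding [Finite V] {H : SimpleGraph W} {G : SimpleGraph V} (f : H ↪g G) :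
    phi H ≤ phi G := by
  have hex : ∀ S : Set W, ∃ T : Set V, IsMaxDissoc H S → IsMaxDissoc G T ∧ f '' S ⊆ T := by
    intro S
    by_cases hS : IsMaxDissoc H S
    · obtain ⟨T, hT, h⟩ := (isDissoc_image f hS.1).exists_isMaxDissoc_superset
      exact ⟨T, fun _ => ⟨hT, h⟩⟩
    · exact ⟨∅, fun h => absurd h hS⟩
  choose E hE using hex
  refine Set.ncard_le_ncard_of_injOn E (fun S hS => (hE S hS).1) (fun S hS T hT h => ?_)
    (Set.toFinite _)
  rw [← hS.preimage_eq f (hE S hS).1.1 (hE S hS).2, h,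
    hT.preimage_eq f (hE T hT).1.1 (hE T hT).2]

theorem phi_eq_of_iso [Finite V] {H : SimpleGraph W} {G : SimpleGraph V} (f : H ≃g G) :
    phi H = phi G :=
  have : Finite W := Finite.of_equiv V f.symm.toEquiv
  (phi_le_of_embedding f.toEmbedding).antisymm (phi_le_of_embedding f.symm.toEmbedding)

theorem phi_mul_phi_le_phi_sum [Finite V] [Finite W] (G : SimpleGraph V) (H : SimpleGraph W) :
    phi G * phi H ≤ phi (G ⊕g H) := by
  unfold phi
  rw [← Set.ncard_prod]
  have hL : ∀ (S : Set V) (T : Set W), Sum.inl ⁻¹' (Sum.inl '' S ∪ Sum.inr '' T) = S := by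
    intro S T; ext x; simp
  have hR : ∀ (S : Set V) (T : Set W), Sum.inr ⁻¹' (Sum.inl '' S ∪ Sum.inr '' T) = T := by
    intro S T; ext x; simp
  refine Set.ncard_le_ncard_of_injOn (fun p => Sum.inl '' p.1 ∪ Sum.inr '' p.2) ?_ ?_
    (Set.toFinite _)
  · rintro ⟨S, T⟩ ⟨hS, hT⟩
    refine ⟨?_, fun U hU hSU => ?_⟩
    · rintro (v | v) hv (a | a) ⟨ha, hva⟩ (b | b) ⟨hb, hvb⟩ <;>
        simp at hv ha hva hb hvb
      · exact congrArg _ (hS.1.eq_of_adj hv ha hb hva hvb)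
      · exact congrArg _ (hT.1.eq_of_adj hv ha hb hva hvb)
    · have h1 := hS.preimage_eq (Embedding.sumInl (G := G) (H := H)) hU
        (Set.subset_union_left.trans hSU)
      have h2 := hT.preimage_eq (Embedding.sumInr (G := G) (H := H)) hU
        (Set.subset_union_right.trans hSU)
      refine hSU.antisymm ?_
      rintro (x | x) hx
      · left
        exact ⟨x, h1 ▸ hx, rfl⟩
      · right
        exact ⟨x, h2 ▸ hx, rfl⟩
  · rintro ⟨S, T⟩ _ ⟨S', T'⟩ _ h
    have h1 := congrArg (Sum.inl ⁻¹' ·) h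
    have h2 := congrArg (Sum.inr ⁻¹' ·) h
    simp only [hL, hR] at h1 h2
    rw [h1, h2]

/-- Some maximal dissociation set through `w` stays maximal in `H - w` after deleting `w`. -/
def DeletableAt (H : SimpleGraph W) (w : W) : Prop :=
  ∃ S, IsDissoc H S ∧ w ∈ S ∧ ∀ x ∉ S, ¬ IsDissoc H (insert x (S \ {w}))

theorem DeletableAt.of_iso {H : SimpleGraph W} {G : SimpleGraph V} (f : H ≃g G) {w : W}
    (h : DeletableAt G (f w)) : DeletableAt H w := by
  obtain ⟨S, hS, hw, hmax⟩ := h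
  refine ⟨f ⁻¹' S, isDissoc_preimage f.toEmbedding hS, hw, fun x hx hd => hmax (f x) hx ?_⟩
  refine (isDissoc_image f.toEmbedding hd).mono ?_
  rintro y (rfl | ⟨hy, hyw⟩)
  · exact ⟨x, Set.mem_insert _ _, rfl⟩
  · refine ⟨f.symm y, Or.inr ⟨?_, ?_⟩, by simp⟩
    · simpa using hy
    · rintro rfl
      simp at hyw

theorem add_two_le_ncard {α : Type*} {I M : Set α} (hM : M.Finite) (hI : I ⊆ M) {x y : α}
    (hx : x ∈ M) (hy : y ∈ M) (hxI : x ∉ I) (hyI : y ∉ I) (hxy : x ≠ y) :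
    I.ncard + 2 ≤ M.ncard := by
  have hIf := hM.subset hI
  have h1 : (insert x (insert y I)).ncard = I.ncard + 2 := by
    rw [Set.ncard_insert_of_notMem (by simp [hxy, hxI]) (hIf.insert y),
      Set.ncard_insert_of_notMem hyI hIf]
  rw [← h1]
  exact Set.ncard_le_ncard (Set.insert_subset hx (Set.insert_subset hy hI)) hM

theorem isDissoc_pair (G : SimpleGraph V) (a b : V) : IsDissoc G {a, b} := by
  rintro x hx y ⟨hy, hxy⟩ z ⟨hz, hxz⟩
  have h1 := hxy.ne
  have h2 := hxz.ne
  simp only [Set.mem_insert_iff, Set.mem_singleton_iff] at hx hy hz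
  grind

section Gain

variable [Finite V] {H : SimpleGraph W} {G : SimpleGraph V} (f : H ↪g G) {u v : V} {w : W}

/-- Extending the maximal dissociation sets of `H` to those of `G`, using `u` as far as possible,
misses every set containing `f w` and `v` as well as every set with a non-maximal trace. -/
theorem exists_extension_family
    (hK : ∀ S, IsDissoc G S → u ∈ S → v ∈ S → f w ∉ S)
    (hu : ∀ S, IsDissoc G S → f w ∈ S → v ∈ S → IsDissoc G (insert u (S \ {v})))
    (hv : v ∉ Set.range f) :
    ∃ I ⊆ {S | IsMaxDissoc G S}, I.ncard = phi H ∧ (∀ T, f w ∈ T → v ∈ T → T ∉ I) ∧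
      ∀ T, ¬ IsMaxDissoc H (f ⁻¹' T) → T ∉ I := by
  have hex : ∀ S : Set W, ∃ T : Set V, IsMaxDissoc H S → IsMaxDissoc G T ∧ f '' S ⊆ T ∧
      (IsDissoc G (insert u (f '' S)) → u ∈ T) := by
    intro S
    by_cases hS : IsMaxDissoc H S
    · by_cases hS' : IsDissoc G (insert u (f '' S))
      · obtain ⟨T, hT, h⟩ := hS'.exists_isMaxDissoc_superset
        exact ⟨T, fun _ => ⟨hT, (Set.subset_insert _ _).trans h, fun _ => h (Set.mem_insert _ _)⟩⟩
      · obtain ⟨T, hT, h⟩ := (isDissoc_image f hS.1).exists_isMaxDissoc_superset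
        exact ⟨T, fun _ => ⟨hT, h, fun h => absurd h hS'⟩⟩
    · exact ⟨∅, fun h => absurd h hS⟩
  choose E hE using hex
  have htr : ∀ S, IsMaxDissoc H S → f ⁻¹' (E S) = S := fun S hS =>
    hS.preimage_eq f (hE S hS).1.1 (hE S hS).2.1
  refine ⟨E '' {S | IsMaxDissoc H S}, ?_, ?_, ?_, ?_⟩
  · rintro _ ⟨S, hS, rfl⟩
    exact (hE S hS).1
  · refine Set.InjOn.ncard_image fun S hS T hT h => ?_
    rw [← htr S hS, h, htr T hT]
  · rintro _ hw hvT ⟨S, hS, rfl⟩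
    have hd := (hE S hS).1.1
    refine hK _ hd ((hE S hS).2.2 ((hu _ hd hw hvT).mono (Set.insert_subset_insert ?_))) hvT hw
    rintro _ ⟨x, hx, rfl⟩
    exact ⟨(hE S hS).2.1 ⟨x, hx, rfl⟩, fun h => hv ⟨x, h⟩⟩
  · rintro _ hT ⟨S, hS, rfl⟩
    rw [htr S hS] at hT
    exact hT hS

theorem phi_add_one_le
    (hK : ∀ S, IsDissoc G S → u ∈ S → v ∈ S → f w ∉ S)
    (hu : ∀ S, IsDissoc G S → f w ∈ S → v ∈ S → IsDissoc G (insert u (S \ {v})))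
    (hv : v ∉ Set.range f) : phi H + 1 ≤ phi G := by
  obtain ⟨I, hI, hcard, h1, -⟩ := exists_extension_family f hK hu hv
  obtain ⟨T, hT, hwT⟩ := (isDissoc_pair G (f w) v).exists_isMaxDissoc_superset
  rw [← hcard, ← Set.ncard_insert_of_notMem (h1 T (hwT (by simp)) (hwT (by simp)))]
  exact Set.ncard_le_ncard (Set.insert_subset hT hI)

theorem DeletableAt.phi_add_two_le (hD : DeletableAt H w)
    (hK : ∀ S, IsDissoc G S → u ∈ S → v ∈ S → f w ∉ S)
    (hu : ∀ S, IsDissoc G S → f w ∈ S → v ∈ S → IsDissoc G (insert u (S \ {v})))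
    (huv : ∀ S, IsDissoc H S → w ∉ S → IsDissoc G (f '' S ∪ {u, v}))
    (hv : v ∉ Set.range f) : phi H + 2 ≤ phi G := by
  obtain ⟨I, hI, hcard, h1, h2⟩ := exists_extension_family f hK hu hv
  obtain ⟨T, hT, hwT⟩ := (isDissoc_pair G (f w) v).exists_isMaxDissoc_superset
  obtain ⟨S, hS, hwS, hmax⟩ := hD
  obtain ⟨T', hT', hST'⟩ :=
    (huv (S \ {w}) (hS.mono Set.sdiff_subset) (by simp)).exists_isMaxDissoc_superset
  have hwT' : f w ∉ T' := hK T' hT'.1 (hST' (by simp)) (hST' (by simp))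
  rw [← hcard]
  refine add_two_le_ncard (Set.toFinite _) hI hT hT' (h1 T (hwT (by simp)) (hwT (by simp)))
    (h2 T' fun hmd => hwT' ?_) (fun h => hwT' (h ▸ hwT (by simp)))
  have hsub : f ⁻¹' T' ⊆ S := by
    intro x hx
    by_contra hxS
    refine hmax x hxS (hmd.1.mono (Set.insert_subset hx fun y hy => hST' (Or.inl ⟨y, hy, rfl⟩)))
  have := hmd.2 S hS hsub
  rw [← this] at hwS
  exact hwS

theorem phi_add_two_le_of_twin
    (hK : ∀ S, IsDissoc G S → u ∈ S → v ∈ S → f w ∉ S)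
    (hu : ∀ S, IsDissoc G S → f w ∈ S → v ∈ S → IsDissoc G (insert u (S \ {v})))
    (hv : v ∉ Set.range f) (hur : u ∉ Set.range f) (huw : G.Adj (f w) u)
    (h0 : ∀ S, IsMaxDissoc H S → w ∈ S → ∃ x ∈ S, H.Adj w x) : phi H + 2 ≤ phi G := by
  obtain ⟨I, hI, hcard, h1, h2⟩ := exists_extension_family f hK hu hv
  obtain ⟨T, hT, hwT⟩ := (isDissoc_pair G (f w) v).exists_isMaxDissoc_superset
  obtain ⟨T', hT', hwT'⟩ := (isDissoc_pair G (f w) u).exists_isMaxDissoc_superset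
  rw [← hcard]
  refine add_two_le_ncard (Set.toFinite _) hI hT hT' (h1 T (hwT (by simp)) (hwT (by simp)))
    (h2 T' fun hmd => ?_)
    (fun h => hK T' hT'.1 (hwT' (by simp)) (h ▸ hwT (by simp)) (hwT' (by simp)))
  obtain ⟨x, hx, hwx⟩ := h0 _ hmd (hwT' (by simp))
  exact hur ⟨x, hT'.1.eq_of_adj (hwT' (by simp)) hx (hwT' (by simp)) (f.map_rel_iff.2 hwx) huw⟩

end Gain

section Computation

/-- A decidable form of `IsDissoc`. -/
def DissocFinset (G : SimpleGraph V) (S : Finset V) : Prop :=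
  ∀ v ∈ S, ∀ a ∈ S, G.Adj v a → ∀ b ∈ S, G.Adj v b → a = b

instance [DecidableEq V] (G : SimpleGraph V) [DecidableRel G.Adj] (S : Finset V) :
    Decidable (DissocFinset G S) :=
  inferInstanceAs (Decidable (∀ v ∈ S, ∀ a ∈ S, G.Adj v a → ∀ b ∈ S, G.Adj v b → a = b))

theorem isDissoc_coe_iff {G : SimpleGraph V} {S : Finset V} :
    IsDissoc G (S : Set V) ↔ DissocFinset G S :=
  ⟨fun h _ hv _ ha hva _ hb hvb => h.eq_of_adj hv ha hb hva hvb,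
    fun h v hv _ ha _ hb => h v hv _ ha.1 ha.2 _ hb.1 hb.2⟩

/-- The maximal dissociation sets as a finset of finsets. -/
def maxDissocFinset [Fintype V] [DecidableEq V] (G : SimpleGraph V) [DecidableRel G.Adj] :
    Finset (Finset V) :=
  {S : Finset V | DissocFinset G S ∧ ∀ x, x ∉ S → ¬ DissocFinset G (insert x S)}

theorem mem_maxDissocFinset [Fintype V] [DecidableEq V] {G : SimpleGraph V} [DecidableRel G.Adj]
    {S : Finset V} :
    S ∈ maxDissocFinset G ↔ IsMaxDissoc G (S : Set V) := by
  rw [isMaxDissoc_iff, isDissoc_coe_iff, maxDissocFinset, Finset.mem_filter]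
  simp only [Finset.mem_univ, true_and, Finset.mem_coe, ← Finset.coe_insert, isDissoc_coe_iff]

theorem phi_eq_card [Fintype V] [DecidableEq V] (G : SimpleGraph V) [DecidableRel G.Adj] :
    phi G = (maxDissocFinset G).card := by
  rw [phi, ← Set.ncard_coe_finset (maxDissocFinset G)]
  symm
  refine Set.ncard_congr (fun S _ => (S : Set V)) (fun S hS => mem_maxDissocFinset.1 hS)
    (fun S T _ _ h => Finset.coe_injective h) fun S hS => ?_
  refine ⟨(Set.toFinite S).toFinset, mem_maxDissocFinset.2 ?_, ?_⟩
  · simpa using hS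
  · simp

theorem deletableAt_of_finset [DecidableEq V] {G : SimpleGraph V} {w : V} {S : Finset V}
    (h : DissocFinset G S ∧ w ∈ S ∧ ∀ x, x ∉ S → ¬ DissocFinset G (insert x (S.erase w))) :
    DeletableAt G w := by
  refine ⟨S, isDissoc_coe_iff.2 h.1, h.2.1, fun x hx hd => h.2.2 x hx (isDissoc_coe_iff.1 ?_)⟩
  simpa only [Finset.coe_insert, Finset.coe_erase] using hd

section GraphUrtF

variable {r t : ℕ} {m : Fin t → Fin r}

@[simp]
theorem graphUrtF_adj_inl_inl {i j : Fin r} :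
    (graphUrtF r t m).Adj (.inl i) (.inl j) ↔ (cycleGraph r).Adj i j := by
  simp only [graphUrtF, fromRel_adj]
  constructor
  · rintro ⟨-, (⟨_, _, h1, h2, h⟩ | ⟨_, _, h⟩) | (⟨_, _, h1, h2, h⟩ | ⟨_, _, h⟩)⟩ <;> simp_all
    exact h.symm
  · exact fun h => ⟨by simpa using h.ne, by simp [h]⟩

@[simp]
theorem graphUrtF_adj_inl_inr {i : Fin r} {j : Fin t} :
    (graphUrtF r t m).Adj (.inl i) (.inr j) ↔ i = m j := by
  simp [graphUrtF]

@[simp]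
theorem graphUrtF_adj_inr_inl {i : Fin r} {j : Fin t} :
    (graphUrtF r t m).Adj (.inr j) (.inl i) ↔ i = m j := by
  simp [graphUrtF]

@[simp]
theorem not_graphUrtF_adj_inr_inr {i j : Fin t} :
    ¬ (graphUrtF r t m).Adj (.inr i) (.inr j) := by
  simp [graphUrtF]

instance : DecidableRel (graphUrtF r t m).Adj
  | .inl _, .inl _ => decidable_of_iff _ graphUrtF_adj_inl_inl.symm
  | .inl _, .inr _ => decidable_of_iff _ graphUrtF_adj_inl_inr.symm
  | .inr _, .inl _ => decidable_of_iff _ graphUrtF_adj_inr_inl.symm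
  | .inr _, .inr _ => isFalse not_graphUrtF_adj_inr_inr

end GraphUrtF

instance (n : ℕ) : DecidableRel (pathGraph n).Adj :=
  fun _ _ => decidable_of_iff _ pathGraph_adj.symm

theorem phi_cycleGraph_six : phi (cycleGraph 6) = 5 := by
  rw [phi_eq_card]
  decide +kernel

theorem phi_graphUrtF_five_one : phi (graphUrtF 5 1 (Fin.castLE (by omega))) = 5 := by
  rw [phi_eq_card]
  decide +kernel

theorem phi_graphUrtF_four_four : phi (graphUrtF 4 4 (Fin.castLE (by omega))) = 6 := by
  rw [phi_eq_card]
  decide +kernel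

theorem phi_cycleGraph_four : phi (cycleGraph 4) = 6 := by
  rw [phi_eq_card]
  decide +kernel

theorem phi_cycleGraph_five : phi (cycleGraph 5) = 5 := by
  rw [phi_eq_card]
  decide +kernel

theorem phi_cycleGraph_seven : phi (cycleGraph 7) = 14 := by
  rw [phi_eq_card]
  decide +kernel

theorem phi_cycleGraph_eight : phi (cycleGraph 8) = 14 := by
  rw [phi_eq_card]
  decide +kernel

theorem phi_graphUrtF_three_one : phi (graphUrtF 3 1 ![0]) = 4 := by
  rw [phi_eq_card]
  decide +kernel

theorem phi_graphUrtF_three_three : phi (graphUrtF 3 3 id) = 6 := by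
  rw [phi_eq_card]
  decide +kernel

theorem phi_graphUrtF_five_two : phi (graphUrtF 5 2 ![0, 2]) = 8 := by
  rw [phi_eq_card]
  decide +kernel

theorem phi_graphUrtF_six_one : phi (graphUrtF 6 1 ![0]) = 9 := by
  rw [phi_eq_card]
  decide +kernel

theorem phi_pathGraph_three : phi (pathGraph 3) = 3 := by
  rw [phi_eq_card]
  decide +kernel

theorem phi_pathGraph_six : phi (pathGraph 6) = 6 := by
  rw [phi_eq_card]
  decide +kernel

theorem phi_pathGraph_seven : phi (pathGraph 7) = 9 := by
  rw [phi_eq_card]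
  decide +kernel

theorem phi_pathGraph_eight : phi (pathGraph 8) = 12 := by
  rw [phi_eq_card]
  decide +kernel

theorem phi_pathGraph_nine : phi (pathGraph 9) = 16 := by
  rw [phi_eq_card]
  decide +kernel

theorem deletableAt_cycleGraph_six (w : Fin 6) : DeletableAt (cycleGraph 6) w := by
  have h : ∀ w : Fin 6, ∃ S : Finset (Fin 6), DissocFinset (cycleGraph 6) S ∧ w ∈ S ∧
      ∀ x, x ∉ S → ¬ DissocFinset (cycleGraph 6) (insert x (S.erase w)) := by
    decide +kernel
  exact (h w).elim fun _ => deletableAt_of_finset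

theorem deletableAt_graphUrtF_five_one (w : Fin 5 ⊕ Fin 1) :
    DeletableAt (graphUrtF 5 1 (Fin.castLE (by omega))) w := by
  have h : ∀ w : Fin 5 ⊕ Fin 1, ∃ S : Finset (Fin 5 ⊕ Fin 1),
      DissocFinset (graphUrtF 5 1 (Fin.castLE (by omega))) S ∧ w ∈ S ∧ ∀ x, x ∉ S →
        ¬ DissocFinset (graphUrtF 5 1 (Fin.castLE (by omega))) (insert x (S.erase w)) := by
    decide +kernel
  exact (h w).elim fun _ => deletableAt_of_finset

theorem deletableAt_graphUrtF_four_four (w : Fin 4 ⊕ Fin 4) :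
    DeletableAt (graphUrtF 4 4 (Fin.castLE (by omega))) w := by
  have h : ∀ w : Fin 4 ⊕ Fin 4, ∃ S : Finset (Fin 4 ⊕ Fin 4),
      DissocFinset (graphUrtF 4 4 (Fin.castLE (by omega))) S ∧ w ∈ S ∧ ∀ x, x ∉ S →
        ¬ DissocFinset (graphUrtF 4 4 (Fin.castLE (by omega))) (insert x (S.erase w)) := by
    decide +kernel
  exact (h w).elim fun _ => deletableAt_of_finset

end Computation

theorem three_mul_phi_pathGraph_le (k : ℕ) :
    3 * phi (pathGraph k) ≤ phi (pathGraph (k + 4)) := by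
  let g : Fin k ⊕ Fin 3 → Fin (k + 4) :=
    Sum.elim (fun i => ⟨i, by omega⟩) (fun i => ⟨k + 1 + i, by omega⟩)
  have hg : ∀ a b, (pathGraph (k + 4)).Adj (g a) (g b) ↔ (pathGraph k ⊕g pathGraph 3).Adj a b := by
    rintro (i | i) (j | j) <;> simp [pathGraph_adj, g] <;> omega
  let f : pathGraph k ⊕g pathGraph 3 ↪g pathGraph (k + 4) :=
    { toFun := g
      inj' := by
        rintro (i | i) (j | j) h <;> simp [g, Fin.ext_iff] at h ⊢ <;> omega
      map_rel_iff' := hg _ _ }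
  calc 3 * phi (pathGraph k) = phi (pathGraph k) * phi (pathGraph 3) := by
        rw [phi_pathGraph_three, mul_comm]
    _ ≤ _ := (phi_mul_phi_le_phi_sum _ _).trans (phi_le_of_embedding f)

theorem add_four_le_phi_pathGraph (k : ℕ) (hk : 8 ≤ k) : k + 4 ≤ phi (pathGraph k) := by
  induction k using Nat.strong_induction_on with
  | _ k ih =>
    obtain rfl | rfl | h : k = 8 ∨ k = 9 ∨ 10 ≤ k := by omega
    · exact phi_pathGraph_eight.ge
    · rw [phi_pathGraph_nine]; omega
    obtain ⟨k, rfl⟩ : ∃ l, k = l + 4 := ⟨k - 4, by omega⟩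
    have := three_mul_phi_pathGraph_le k
    obtain rfl | rfl | h : k = 6 ∨ k = 7 ∨ 8 ≤ k := by omega
    · rw [phi_pathGraph_six] at this; omega
    · rw [phi_pathGraph_seven] at this; omega
    · have := ih k (by omega) h
      omega

theorem add_three_le_phi_cycleGraph (r : ℕ) (hr : 7 ≤ r) : r + 3 ≤ phi (cycleGraph r) := by
  obtain rfl | rfl | h : r = 7 ∨ r = 8 ∨ 9 ≤ r := by omega
  · rw [phi_cycleGraph_seven]; omega
  · rw [phi_cycleGraph_eight]; omega
  obtain ⟨k, rfl⟩ : ∃ k, r = k + 2 := ⟨r - 2, by omega⟩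
  let f : pathGraph (k + 1) ↪g cycleGraph (k + 2) :=
    { toFun := Fin.castSucc
      inj' := Fin.castSucc_injective _
      map_rel_iff' := by
        intro i j
        simp only [cycleGraph_adj', pathGraph_adj, Function.Embedding.coeFn_mk, Fin.sub_def,
          Fin.val_castSucc]
        have := i.2
        have := j.2
        rcases le_or_gt i.val j.val with h | h
        · rw [show k + 2 - j.val + i.val = k + 2 - (j.val - i.val) by omega,
            show k + 2 - i.val + j.val = k + 2 + (j.val - i.val) by omega, Nat.add_mod_left,
            Nat.mod_eq_of_lt (show j.val - i.val < k + 2 by omega)]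
          rcases Nat.eq_zero_or_pos (j.val - i.val) with h0 | h0
          · rw [h0]; simp; omega
          · rw [Nat.mod_eq_of_lt (by omega)]; omega
        · rw [show k + 2 - i.val + j.val = k + 2 - (i.val - j.val) by omega,
            show k + 2 - j.val + i.val = k + 2 + (i.val - j.val) by omega, Nat.add_mod_left,
            Nat.mod_eq_of_lt (show i.val - j.val < k + 2 by omega),
            Nat.mod_eq_of_lt (show k + 2 - (i.val - j.val) < k + 2 by omega)]
          omega }
  exact (add_four_le_phi_pathGraph (k + 1) (by omega)).trans (phi_le_of_embedding f)

section Hub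

/-- A vertex `c` lying on a triangle and having a third neighbour, such that the other vertices
form a dissociation set in which every edge meets the neighbourhood of `c`. -/
structure IsHub (G : SimpleGraph V) (c : V) : Prop where
  isDissoc_compl : IsDissoc G {c}ᶜ
  not_adj : ∀ ⦃x y⦄, ¬ G.Adj c x → ¬ G.Adj c y → ¬ G.Adj x y
  exists_adj : ∃ a b d, a ≠ d ∧ b ≠ d ∧ G.Adj c a ∧ G.Adj c b ∧ G.Adj c d ∧ G.Adj a b

namespace IsHub

variable {G : SimpleGraph V} {c : V}

theorem exists_adj_of_mem (hc : IsHub G c) {S : Set V} (hS : IsMaxDissoc G S)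
    (hcS : c ∈ S) : ∃ x ∈ S, G.Adj c x := by
  by_contra! hno
  obtain ⟨a, b, -, -, -, ha, hb, -, hab⟩ := hc.exists_adj
  have hedge : ∀ x, x ≠ c → G.Adj a x → x = b := fun x hx hax =>
    hc.isDissoc_compl.eq_of_adj ha.ne' hx hb.ne' hax hab
  have haS : a ∉ S := fun h => hno a h ha
  have hbS : b ∉ S := fun h => hno b h hb
  have key : ∀ x ∈ S, G.Adj a x → x = c := by
    intro x hx hax
    by_contra hxc
    exact hbS (hedge x hxc hax ▸ hx)
  refine (isMaxDissoc_iff.1 hS).2 a haS ?_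
  rintro v (rfl | hv) x ⟨rfl | hx, hvx⟩ y ⟨rfl | hy, hvy⟩
  · rfl
  · exact absurd rfl hvx.ne
  · exact absurd rfl hvy.ne
  · rw [key x hx hvx, key y hy hvy]
  · rfl
  · obtain rfl := key v hv hvx.symm
    exact absurd hvy (hno y hy)
  · obtain rfl := key v hv hvy.symm
    exact absurd hvx (hno x hx)
  · exact hS.1.eq_of_adj hv hx hy hvx hvy

theorem deletableAt (hc : IsHub G c) {w : V} (hw : w ≠ c) : DeletableAt G w := by
  obtain ⟨a, b, d, had, hbd, ha, hb, hd, hab⟩ := hc.exists_adj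
  refine ⟨{c}ᶜ, hc.isDissoc_compl, hw, fun x hx hdis => ?_⟩
  obtain rfl : x = c := by simpa using hx
  have key : ∀ p q, G.Adj x p → G.Adj x q → p ≠ w → q ≠ w → p = q := fun p q hp hq hpw hqw =>
    hdis.eq_of_adj (Set.mem_insert _ _) (Or.inr ⟨hp.ne', hpw⟩) (Or.inr ⟨hq.ne', hqw⟩) hp hq
  by_cases haw : a = w
  · exact hbd (key b d hb hd (haw ▸ hab.ne') (haw ▸ had.symm))
  · by_cases hbw : b = w
    · exact had (key a d ha hd haw (hbw ▸ hbd.symm))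
    · exact hab.ne (key a b ha hb haw hbw)

theorem phi_le [Finite V] (hc : IsHub G c) : phi G ≤ (G.neighborSet c).ncard + 1 := by
  let F : V → Set V := fun x => {y | y = c ∨ y = x ∨ (¬ G.Adj c y ∧ ¬ G.Adj x y)}
  have hsub : {S | IsMaxDissoc G S} ⊆ insert {c}ᶜ (F '' G.neighborSet c) := by
    intro S hS
    by_cases hcS : c ∈ S
    · right
      obtain ⟨x, hx, hcx⟩ := hc.exists_adj_of_mem hS hcS
      refine ⟨x, hcx, (hS.2 (F x) ?_ ?_).symm⟩
      · rintro v hv p ⟨hp, hvp⟩ q ⟨hq, hvq⟩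
        have := hcx.symm
        have hn := hc.not_adj
        have h1 := hvp.symm
        have h2 := hvq.symm
        have h3 := hvp.ne
        have h4 := hvq.ne
        simp only [F, Set.mem_ofPred_eq] at hv hp hq
        grind
      · intro y hy
        by_cases hyc : y = c
        · exact Or.inl hyc
        by_cases hyx : y = x
        · exact Or.inr (Or.inl hyx)
        refine Or.inr (Or.inr ⟨fun h => hyx ?_, fun h => hyc ?_⟩)
        · exact hS.1.eq_of_adj hcS hy hx h hcx
        · exact hS.1.eq_of_adj hx hy hcS h hcx.symm
    · left
      exact hS.2 _ hc.isDissoc_compl fun x hx => by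
        rintro rfl
        exact hcS hx
  calc phi G ≤ (insert {c}ᶜ (F '' G.neighborSet c)).ncard :=
        Set.ncard_le_ncard hsub (Set.toFinite _)
    _ ≤ (F '' G.neighborSet c).ncard + 1 := Set.ncard_insert_le _ _
    _ ≤ _ := Nat.add_le_add_right (Set.ncard_image_le (Set.toFinite _)) 1

end IsHub

theorem IsHub.of_iso {G : SimpleGraph V} {H : SimpleGraph W} {c : V} {w : W} (hc : IsHub G c)
    (e : H ≃g G) (hw : e w = c) : IsHub H w where
  isDissoc_compl := by
    rintro v hv x ⟨hx, hvx⟩ y ⟨hy, hvy⟩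
    have key : ∀ {z}, z ∈ ({w}ᶜ : Set W) → e z ∈ ({c}ᶜ : Set V) := fun hz h =>
      hz (e.injective (h.trans hw.symm))
    exact e.injective (hc.isDissoc_compl.eq_of_adj (key hv) (key hx) (key hy)
      (e.map_adj_iff.2 hvx) (e.map_adj_iff.2 hvy))
  not_adj x y hx hy hxy := by
    rw [← e.map_adj_iff, hw] at hx hy
    exact hc.not_adj hx hy (e.map_adj_iff.2 hxy)
  exists_adj := by
    obtain ⟨a, b, d, had, hbd, ha, hb, hd, hab⟩ := hc.exists_adj
    refine ⟨e.symm a, e.symm b, e.symm d, e.symm.injective.ne had, e.symm.injective.ne hbd, ?_⟩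
    have : w = e.symm c := by rw [← hw, e.symm_apply_apply]
    simp only [this, e.symm.map_adj_iff]
    exact ⟨ha, hb, hd, hab⟩

end Hub

section GraphU

variable {p q : ℕ} {h : q ≤ p}

@[simp]
theorem graphU_adj_center_triangle {z : Unit} {i : Fin 2} :
    (graphU p q h).Adj (.inl z) (.inr (.inl i)) := by
  simp [graphU]
  omega

@[simp]
theorem graphU_adj_center_leg {z : Unit} {i : Fin p} :
    (graphU p q h).Adj (.inl z) (.inr (.inr (.inl i))) := by
  simp [graphU]

@[simp]
theorem not_graphU_adj_center_leaf {z : Unit} {j : Fin q} :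
    ¬ (graphU p q h).Adj (.inl z) (.inr (.inr (.inr j))) := by
  simp [graphU]

@[simp]
theorem graphU_adj_triangle_triangle {i j : Fin 2} :
    (graphU p q h).Adj (.inr (.inl i)) (.inr (.inl j)) ↔ i ≠ j := by
  simp [graphU]
  omega

@[simp]
theorem not_graphU_adj_triangle_leg {i : Fin 2} {j : Fin p ⊕ Fin q} :
    ¬ (graphU p q h).Adj (.inr (.inl i)) (.inr (.inr j)) := by
  simp [graphU]

@[simp]
theorem not_graphU_adj_leg_triangle {i : Fin 2} {j : Fin p ⊕ Fin q} :
    ¬ (graphU p q h).Adj (.inr (.inr j)) (.inr (.inl i)) := by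
  simp [graphU]

@[simp]
theorem not_graphU_adj_leg_leg {i j : Fin p} :
    ¬ (graphU p q h).Adj (.inr (.inr (.inl i))) (.inr (.inr (.inl j))) := by
  simp [graphU]

@[simp]
theorem not_graphU_adj_leaf_leaf {i j : Fin q} :
    ¬ (graphU p q h).Adj (.inr (.inr (.inr i))) (.inr (.inr (.inr j))) := by
  simp [graphU]

@[simp]
theorem graphU_adj_leg_leaf {i : Fin p} {j : Fin q} :
    (graphU p q h).Adj (.inr (.inr (.inl i))) (.inr (.inr (.inr j))) ↔ i.val = j.val := by
  simp only [graphU, fromRel_adj]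
  simp [Fin.ext_iff]
  exact ⟨fun ⟨_, h1, h2⟩ => h1.trans h2.symm, fun h => ⟨j, h, rfl⟩⟩

theorem isHub_graphU (hp : 0 < p) : IsHub (graphU p q h) (.inl ()) where
  isDissoc_compl := by
    rintro (v | v | v | v) hv (x | x | x | x) ⟨hx, hvx⟩ (y | y | y | y) ⟨hy, hvy⟩ <;>
      simp [adj_comm _ (Sum.inr (Sum.inr (Sum.inr _))) (Sum.inr (Sum.inr (Sum.inl _)))]
        at hv hx hy hvx hvy ⊢ <;> omega
  not_adj := by
    rintro (x | x | x | x) (y | y | y | y) <;> simp [adj_comm _ (Sum.inr _) (Sum.inl _)]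
  exists_adj := ⟨.inr (.inl 0), .inr (.inl 1), .inr (.inr (.inl ⟨0, hp⟩)), by simp⟩

theorem phi_graphU_le (hp : 0 < p) : phi (graphU p q h) ≤ p + 3 := by
  refine (isHub_graphU hp).phi_le.trans ?_
  have : (graphU p q h).neighborSet (.inl ()) ⊆
      Set.range (fun i : Fin 2 ⊕ Fin p => Sum.inr (i.map id Sum.inl)) := by
    rintro (x | x | x | x) hx
    · simp at hx
    · exact ⟨.inl x, rfl⟩
    · exact ⟨.inr x, rfl⟩
    · simp at hx
  have h1 := Set.ncard_le_ncard this (Set.toFinite _)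
  rw [← Set.image_univ] at h1
  have h2 := h1.trans (Set.ncard_image_le (Set.toFinite _))
  rw [Set.ncard_univ] at h2
  simp at h2
  omega

theorem nonempty_iso_of_bijective {X Y Z : Type*} {G : SimpleGraph Y} {H : SimpleGraph Z}
    {e : X → Y} {f : X → Z} (he : e.Bijective) (hf : f.Bijective)
    (hadj : ∀ a b, G.Adj (e a) (e b) ↔ H.Adj (f a) (f b)) : Nonempty (G ≃g H) := by
  refine ⟨⟨(Equiv.ofBijective e he).symm.trans (Equiv.ofBijective f hf), ?_⟩⟩
  intro a b
  obtain ⟨a, rfl⟩ := he.2 a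
  obtain ⟨b, rfl⟩ := he.2 b
  have : ∀ x, (Equiv.ofBijective e he).symm (e x) = x :=
    fun x => (Equiv.ofBijective e he).symm_apply_apply x
  simp [this, hadj]

/-- Attaching a pendant path of length two at the centre of `U(q+1,q)` yields `U(q+2,q+1)`. -/
theorem nonempty_iso_graphU_of_pendant_path {G : SimpleGraph V}
    (f : graphU (q + 1) q (Nat.le_succ q) ↪g G) {u v : V} (huv : u ≠ v)
    (hrange : Set.range f = {u, v}ᶜ) (hu : ∀ x, G.Adj u x ↔ x = v)
    (hv : ∀ x, G.Adj v x ↔ x = u ∨ x = f (.inl ())) :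
    Nonempty (G ≃g graphU (q + 2) (q + 1) (Nat.le_succ _)) := by
  have hfu : ∀ x, f x ≠ u := fun x hx => by
    have : f x ∈ Set.range f := ⟨x, rfl⟩
    simp [hrange, hx] at this
  have hfv : ∀ x, f x ≠ v := fun x hx => by
    have : f x ∈ Set.range f := ⟨x, rfl⟩
    simp [hrange, hx] at this
  let e : (Unit ⊕ Fin 2 ⊕ Fin (q + 1) ⊕ Fin q) ⊕ Bool → V := Sum.elim f (fun b => cond b u v)
  let g : (Unit ⊕ Fin 2 ⊕ Fin (q + 1) ⊕ Fin q) ⊕ Bool →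
      Unit ⊕ Fin 2 ⊕ Fin (q + 2) ⊕ Fin (q + 1) :=
    Sum.elim
      (Sum.map id (Sum.map id (Sum.map
        (fun i => if i.val < q then i.castSucc else Fin.last (q + 1)) Fin.castSucc)))
      (fun b => .inr (.inr (cond b (.inr (Fin.last q)) (.inl ⟨q, by omega⟩))))
  have he : e.Bijective := by
    constructor
    · rintro (a | a | a) (b | b | b) hab <;> simp [e, huv, huv.symm, hfu, hfv] at hab ⊢
      · exact hab
      · exact hfv _ hab.symm
      · exact hfu _ hab.symm
    · intro y
      by_cases hyu : y = u
      · exact ⟨.inr true, hyu.symm⟩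
      by_cases hyv : y = v
      · exact ⟨.inr false, hyv.symm⟩
      have : y ∈ Set.range f := by simp [hrange, hyu, hyv]
      obtain ⟨x, rfl⟩ := this
      exact ⟨.inl x, rfl⟩
  have hg : g.Bijective := by
    rw [Fintype.bijective_iff_injective_and_card]
    constructor
    · rintro ((a | a | a | a) | a | a) ((b | b | b | b) | b | b) hab <;>
        simp [g, Fin.ext_iff] at hab ⊢ <;> (try split_ifs at hab) <;>
        (try simp at hab) <;> omega
    · simp
      omega
  refine nonempty_iso_of_bijective he hg ?_
  have hinj : ∀ x y, f x = f y ↔ x = y := fun _ _ => f.injective.eq_iff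
  have hu' : ∀ x, G.Adj x u ↔ x = v := fun x => by rw [adj_comm, hu]
  have hv' : ∀ x, G.Adj x v ↔ x = u ∨ x = f (.inl ()) := fun x => by rw [adj_comm, hv]
  have hleaf : ∀ {p q : ℕ} {h : q ≤ p} {i : Fin p} {j : Fin q},
      (graphU p q h).Adj (.inr (.inr (.inr j))) (.inr (.inr (.inl i))) ↔ i.val = j.val := by
    intros
    rw [adj_comm, graphU_adj_leg_leaf]
  have hcomm : ∀ {p q : ℕ} {h : q ≤ p} {x} {z : Unit}, (graphU p q h).Adj (.inr x) (.inl z) ↔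
      (graphU p q h).Adj (.inl z) (.inr x) := adj_comm _ _ _
  rintro ((a | a | a | a) | a | a) ((b | b | b | b) | b | b) <;>
    simp [e, g, hu, hv, hu', hv', hinj, hfu, hfv, hleaf, hcomm] <;>
    (try split_ifs) <;> (try simp) <;> (try omega)

end GraphU

section Reduction

variable {G : SimpleGraph V}

theorem IsUnicyclic.induce_compl_singleton [Fintype V] (hG : IsUnicyclic G) {u v : V}
    [Fintype ({u}ᶜ : Set V)] (hu : ∀ x, G.Adj u x ↔ x = v) :
    IsUnicyclic (G.induce {u}ᶜ) := by
  classical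
  refine ⟨hG.1.induce_compl_singleton_of_degree_eq_one (v := u) ?_, ?_⟩
  · rw [degree_eq_one_iff_existsUnique_adj]
    exact ⟨v, (hu v).2 rfl, fun y hy => (hu y).1 hy⟩
  · have himg : Sym2.map Subtype.val '' (G.induce {u}ᶜ).edgeSet = G.edgeSet \ {s(u, v)} := by
      ext e
      induction e with | _ a b => ?_
      constructor
      · rintro ⟨e, he, hab⟩
        induction e with | _ x y => ?_
        rw [← hab]
        refine ⟨he, ?_⟩
        have hx := x.2
        have hy := y.2
        simp at hx hy ⊢
        grind
      · rintro ⟨hab, hne⟩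
        have hab : G.Adj a b := hab
        have ha : a ≠ u := by
          rintro rfl
          exact hne (by rw [(hu b).1 hab]; rfl)
        have hb : b ≠ u := by
          rintro rfl
          exact hne (by rw [(hu a).1 hab.symm, Sym2.eq_swap]; rfl)
        exact ⟨s(⟨a, ha⟩, ⟨b, hb⟩), hab, rfl⟩
    have huv : s(u, v) ∈ G.edgeSet := (hu v).2 rfl
    rw [← Set.ncard_image_of_injective _ (Sym2.map.injective Subtype.val_injective), himg,
      Set.ncard_sdiff_singleton_of_mem huv, hG.2, Fintype.card_compl_set]
    simp

theorem IsUnicyclic.exists_embedding_compl_pair.{u} {V : Type u} {G : SimpleGraph V} [Fintype V]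
    (hG : IsUnicyclic G) {u v w y : V}
    (huv : u ≠ v) (huw : u ≠ w) (hu : ∀ x, G.Adj u x ↔ x = y)
    (hv : ∀ x, x ≠ u → (G.Adj v x ↔ x = w)) :
    ∃ (U : Type u) (_ : Fintype U) (H : SimpleGraph U) (f : H ↪g G),
      IsUnicyclic H ∧ Set.range f = {u, v}ᶜ := by
  classical
  have h1 := hG.induce_compl_singleton hu
  let v' : ({u}ᶜ : Set V) := ⟨v, huv.symm⟩
  let w' : ({u}ᶜ : Set V) := ⟨w, huw.symm⟩
  have hv' : ∀ x, (G.induce {u}ᶜ).Adj v' x ↔ x = w' := fun x => by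
    rw [Subtype.ext_iff]
    exact hv x x.2
  refine ⟨_, inferInstance, _, (Embedding.induce {u}ᶜ).comp (Embedding.induce {v'}ᶜ),
    h1.induce_compl_singleton hv', ?_⟩
  ext x
  constructor
  · rintro ⟨z, rfl⟩ (h | h)
    · exact z.1.2 h
    · exact z.2 (Subtype.ext h)
  · intro hx
    have hxu : x ≠ u := fun h => hx (Or.inl h)
    have hxv : x ≠ v := fun h => hx (Or.inr h)
    exact ⟨⟨⟨x, hxu⟩, fun h => hxv (congrArg Subtype.val h)⟩, rfl⟩

/-- The vertices `u` and `v` form a pendant path `w - v - u` of length two. -/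
structure IsPendantPath (G : SimpleGraph V) (u v w : V) : Prop where
  ne : u ≠ w
  left : ∀ x, G.Adj u x ↔ x = v
  right : ∀ x, G.Adj v x ↔ x = u ∨ x = w

/-- The vertices `u` and `v` are two leaves attached to `w`. -/
structure IsTwin (G : SimpleGraph V) (u v w : V) : Prop where
  ne : u ≠ v
  left : ∀ x, G.Adj u x ↔ x = w
  right : ∀ x, G.Adj v x ↔ x = w

theorem IsUnicyclic.exists_embedding_of_isPendantPath_or_isTwin.{u} {V : Type u}
    {G : SimpleGraph V} [Fintype V] (hG : IsUnicyclic G) {u v w : V}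
    (h : IsPendantPath G u v w ∨ IsTwin G u v w) :
    ∃ (U : Type u) (_ : Fintype U) (H : SimpleGraph U) (f : H ↪g G),
      IsUnicyclic H ∧ Fintype.card U + 2 = Fintype.card V ∧ Set.range f = {u, v}ᶜ ∧
        w ∈ Set.range f := by
  have huv : u ≠ v := by
    rcases h with h | h
    · exact ((h.left v).2 rfl).ne
    · exact h.ne
  have huw : u ≠ w := by
    rcases h with h | h
    · exact h.ne
    · exact ((h.left w).2 rfl).ne
  have hvw : v ≠ w := by
    rcases h with h | h
    · exact ((h.right w).2 (Or.inr rfl)).ne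
    · exact ((h.right w).2 rfl).ne
  obtain ⟨y, hy⟩ : ∃ y, ∀ x, G.Adj u x ↔ x = y := h.elim (⟨_, ·.left⟩) (⟨_, ·.left⟩)
  obtain ⟨U, hU, H, f, hH, hf⟩ := hG.exists_embedding_compl_pair huv huw hy
    (v := v) fun x hx => by
      rcases h with h | h
      · rw [h.right, or_iff_right hx]
      · exact h.right x
  refine ⟨U, hU, H, f, hH, ?_, hf, ?_⟩
  · have h1 := Set.ncard_add_ncard_compl (Set.range f)
    have h2 := Set.ncard_image_of_injective Set.univ f.injective
    rw [Set.image_univ, Set.ncard_univ, Nat.card_eq_fintype_card] at h2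
    rwa [h2, hf, compl_compl, Set.ncard_pair huv, Nat.card_eq_fintype_card] at h1
  · rw [hf]
    rintro (h | h)
    · exact huw h.symm
    · exact hvw h.symm

section Gain

variable {H : SimpleGraph W} {f : H ↪g G} {u v : V} {w : W}

theorem notMem_of_isPendantPath_or_isTwin {w : V} (h : IsPendantPath G u v w ∨ IsTwin G u v w)
    (S : Set V) (hS : IsDissoc G S) (hu : u ∈ S) (hv : v ∈ S) : w ∉ S := by
  intro hw
  rcases h with h | h
  · exact h.ne (hS.eq_of_adj hv hu hw ((h.right u).2 (.inl rfl)) ((h.right w).2 (.inr rfl)))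
  · exact h.ne (hS.eq_of_adj hw hu hv ((h.left w).2 rfl).symm ((h.right w).2 rfl).symm)

theorem isDissoc_exchange {w : V} (h : IsPendantPath G u v w ∨ IsTwin G u v w)
    (S : Set V) (hS : IsDissoc G S) (hw : w ∈ S) (hv : v ∈ S) :
    IsDissoc G (insert u (S \ {v})) := by
  rcases h with h | h
  · have hno : ∀ x, x ∈ insert u (S \ {v}) → ¬ G.Adj u x := by
      rintro x hx hux
      obtain rfl := (h.left x).1 hux
      rcases hx with rfl | hx
      · exact hux.ne rfl
      · exact hx.2 rfl
    rintro p (rfl | hp) x ⟨hx, hpx⟩ y ⟨hy, hpy⟩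
    · exact absurd hpx (hno x hx)
    · rcases hx with rfl | hx
      · exact absurd hpx.symm (hno p (.inr hp))
      rcases hy with rfl | hy
      · exact absurd hpy.symm (hno p (.inr hp))
      exact hS.eq_of_adj hp.1 hx.1 hy.1 hpx hpy
  · have hw' : ∀ x ∈ S, G.Adj w x → x = v := fun x hx hwx =>
      hS.eq_of_adj hw hx hv hwx ((h.right w).2 rfl).symm
    rintro p (rfl | hp) x ⟨hx, hpx⟩ y ⟨hy, hpy⟩
    · rw [(h.left x).1 hpx, (h.left y).1 hpy]
    · rcases hx with rfl | hx <;> rcases hy with rfl | hy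
      · rfl
      · obtain rfl := (h.left p).1 hpx.symm
        exact absurd (hw' y hy.1 hpy) hy.2
      · obtain rfl := (h.left p).1 hpy.symm
        exact absurd (hw' x hx.1 hpx) hx.2
      · exact hS.eq_of_adj hp.1 hx.1 hy.1 hpx hpy

theorem isDissoc_image_union_pair (h : IsPendantPath G u v (f w) ∨ IsTwin G u v (f w))
    (hu : u ∉ Set.range f) (hv : v ∉ Set.range f)
    (S : Set W) (hS : IsDissoc H S) (hw : w ∉ S) : IsDissoc G (f '' S ∪ {u, v}) := by
  have hno : ∀ s ∈ S, ¬ G.Adj u (f s) ∧ ¬ G.Adj v (f s) := by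
    intro s hs
    have hne : f s ≠ f w := fun h => hw (f.injective h ▸ hs)
    have hsu : f s ≠ u := fun h => hu ⟨s, h⟩
    have hsv : f s ≠ v := fun h => hv ⟨s, h⟩
    rcases h with h | h
    · rw [h.left, h.right]
      tauto
    · rw [h.left, h.right]
      tauto
  have hpair := isDissoc_pair G u v
  rintro p (⟨p, hp, rfl⟩ | hp) x ⟨⟨x, hx, rfl⟩ | hx, hpx⟩ y ⟨⟨y, hy, rfl⟩ | hy, hpy⟩
  · rw [hS.eq_of_adj hp hx hy (f.map_adj_iff.1 hpx) (f.map_adj_iff.1 hpy)]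
  · rcases hy with rfl | rfl
    · exact absurd hpy.symm (hno p hp).1
    · exact absurd hpy.symm (hno p hp).2
  · rcases hx with rfl | rfl
    · exact absurd hpx.symm (hno p hp).1
    · exact absurd hpx.symm (hno p hp).2
  · rcases hx with rfl | rfl
    · exact absurd hpx.symm (hno p hp).1
    · exact absurd hpx.symm (hno p hp).2
  · rcases hp with rfl | rfl
    · exact absurd hpx (hno x hx).1
    · exact absurd hpx (hno x hx).2
  · rcases hp with rfl | rfl
    · exact absurd hpx (hno x hx).1
    · exact absurd hpx (hno x hx).2
  · rcases hp with rfl | rfl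
    · exact absurd hpy (hno y hy).1
    · exact absurd hpy (hno y hy).2
  · exact hpair.eq_of_adj hp hx hy hpx hpy

end Gain

/-- The graphs on `2 * q + 4` vertices attaining the minimum. -/
def IsPhiExtremal (q : ℕ) (G : SimpleGraph V) : Prop :=
  Nonempty (G ≃g graphU (q + 1) q (Nat.le_succ q)) ∨
    (q = 1 ∧ (Nonempty (G ≃g cycleGraph 6) ∨ Nonempty (G ≃g graphUrt 5 1 (by omega)))) ∨
    (q = 2 ∧ Nonempty (G ≃g graphUrt 4 4 (by omega)))

/-- Extending an extremal graph by a pendant path or twin leaves adds at least one maximal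
dissociation set, and exactly one only for a pendant path at the centre of `U(q+1,q)`. -/
theorem isPhiExtremal_succ_of_embedding [Finite V] {H : SimpleGraph W} {q : ℕ} {f : H ↪g G}
    {u v : V} {w : W} (h : IsPendantPath G u v (f w) ∨ IsTwin G u v (f w))
    (hrange : Set.range f = {u, v}ᶜ) (hle : q + 4 ≤ phi H)
    (heq : phi H = q + 4 → IsPhiExtremal q H) :
    q + 1 + 4 ≤ phi G ∧ (phi G = q + 1 + 4 → IsPhiExtremal (q + 1) G) := by
  have hfu : u ∉ Set.range f := by simp [hrange]
  have hfv : v ∉ Set.range f := by simp [hrange]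
  have hK := notMem_of_isPendantPath_or_isTwin h
  have hex := isDissoc_exchange h
  have hpair := isDissoc_image_union_pair h hfu hfv
  have h1 := phi_add_one_le f hK hex hfv
  refine ⟨by omega, fun hG => ?_⟩
  have hdel : ¬ DeletableAt H w := fun hD => by
    have := hD.phi_add_two_le f hK hex hpair hfv
    omega
  left
  rcases heq (by omega) with ⟨⟨e⟩⟩ | ⟨-, ⟨⟨e⟩⟩ | ⟨⟨e⟩⟩⟩ | ⟨-, ⟨e⟩⟩
  · have hub : IsHub (graphU (q + 1) q (Nat.le_succ q)) (.inl ()) := isHub_graphU (by omega)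
    have hw : e w = .inl () := by
      by_contra hne
      exact hdel (.of_iso e (hub.deletableAt hne))
    have hew : e.symm (.inl ()) = w := by rw [← hw, e.symm_apply_apply]
    rcases h with h | h
    · refine nonempty_iso_graphU_of_pendant_path (f.comp e.symm.toEmbedding) (u := u) (v := v)
        ?_ ?_ h.left ?_
      · exact ((h.left v).2 rfl).ne
      · rw [← hrange]
        ext x
        constructor
        · rintro ⟨y, rfl⟩
          exact ⟨_, rfl⟩
        · rintro ⟨y, rfl⟩
          exact ⟨e y, congrArg f (e.symm_apply_apply y)⟩
      · intro x
        rw [h.right, ← hew]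
        rfl
    · have := phi_add_two_le_of_twin f hK hex hfv hfu ((h.left _).2 rfl).symm ?_
      · omega
      · intro S hS hwS
        exact (hub.of_iso e hw).exists_adj_of_mem hS hwS
  · exact absurd (.of_iso e (deletableAt_cycleGraph_six _)) hdel
  · exact absurd (.of_iso e (deletableAt_graphUrtF_five_one _)) hdel
  · exact absurd (.of_iso e (deletableAt_graphUrtF_four_four _)) hdel

end Reduction

section ReducedGraph

variable {G : SimpleGraph V}

/-- A graph without pendant paths of length two and without twin leaves. -/
structure IsReducedGraph (G : SimpleGraph V) : Prop where
  not_isPendantPath : ∀ u v w, ¬ IsPendantPath G u v w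
  not_isTwin : ∀ u v w, ¬ IsTwin G u v w

theorem exists_isPendantPath_or_isTwin (h : ¬ IsReducedGraph G) :
    ∃ u v w, IsPendantPath G u v w ∨ IsTwin G u v w := by
  by_contra! hno
  exact h ⟨fun u v w => (hno u v w).1, fun u v w => (hno u v w).2⟩

theorem SimpleGraph.Connected.eq_univ_of_adj_closed (hG : G.Connected) {S : Set V} {v : V}
    (hv : v ∈ S) (hS : ∀ x ∈ S, ∀ y, G.Adj x y → y ∈ S) : S = Set.univ := by
  refine Set.eq_univ_of_forall fun y => ?_
  have h := (reachable_iff_reflTransGen v y).1 (hG.preconnected v y)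
  induction h with
  | refl => exact hv
  | tail _ hab ih => exact hS _ ih _ hab

theorem IsUnicyclic.not_isAcyclic [Fintype V] (hG : IsUnicyclic G) : ¬ G.IsAcyclic := by
  classical
  intro h
  have h1 := (IsTree.mk hG.1 h).card_edgeFinset
  have h2 := hG.2
  rw [← coe_edgeFinset, Set.ncard_coe_finset] at h2
  omega

/-- In a reduced unicyclic graph, every vertex of degree at least two has exactly two
neighbours of degree at least two. -/
theorem IsUnicyclic.card_filter_neighborFinset [Fintype V] [DecidableEq V]
    [DecidableRel G.Adj] (hG : IsUnicyclic G) (hcard : 3 ≤ Fintype.card V)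
    (hred : IsReducedGraph G) {v : V} (hv : G.degree v ≠ 1) :
    ((G.neighborFinset v).filter (G.degree · ≠ 1)).card = 2 := by
  let l : V → ℕ := fun v => ((G.neighborFinset v).filter (G.degree · = 1)).card
  have hpos : ∀ v, 0 < G.degree v := fun v => by
    have : Nontrivial V := Fintype.one_lt_card_iff_nontrivial.1 (by omega)
    exact hG.1.preconnected.degree_pos_of_nontrivial v
  have hleaf : ∀ {v}, G.degree v = 1 → ∀ {x}, G.Adj v x → ∀ y, G.Adj v y ↔ y = x := by
    intro v hv x hx y
    obtain ⟨z, hz, hz'⟩ := degree_eq_one_iff_existsUnique_adj.1 hv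
    rw [hz' x hx]
    exact ⟨hz' y, fun h => h ▸ hz⟩
  have hbound : ∀ v, 2 + l v ≤ G.degree v + if G.degree v = 1 then 1 else 0 := by
    intro v
    split_ifs with h1
    · suffices l v = 0 by omega
      rw [Finset.card_eq_zero, Finset.filter_eq_empty_iff]
      intro u hu hu1
      rw [mem_neighborFinset] at hu
      have hclosed : ({u, v} : Set V) = Set.univ := by
        refine hG.1.eq_univ_of_adj_closed (Set.mem_insert _ _) ?_
        rintro x (rfl | rfl) y hxy
        · exact Or.inr ((hleaf hu1 hu.symm y).1 hxy)
        · exact Or.inl ((hleaf h1 hu y).1 hxy)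
      have h2 := Set.ncard_pair hu.ne'
      rw [hclosed, Set.ncard_univ, Nat.card_eq_fintype_card] at h2
      omega
    · have hl1 : l v ≤ 1 := by
        refine Finset.card_le_one.2 fun a ha b hb => ?_
        rw [Finset.mem_filter, mem_neighborFinset] at ha hb
        by_contra hab
        exact hred.not_isTwin a b v ⟨hab, hleaf ha.2 ha.1.symm, hleaf hb.2 hb.1.symm⟩
      have := hpos v
      by_contra! hlt
      obtain ⟨u, hu⟩ : ((G.neighborFinset v).filter (G.degree · = 1)).Nonempty :=
        Finset.card_pos.1 (show 0 < l v by omega)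
      rw [Finset.mem_filter, mem_neighborFinset] at hu
      obtain ⟨a, b, hab, hN⟩ := Finset.card_eq_two.1 (show (G.neighborFinset v).card = 2 by
        rw [card_neighborFinset_eq_degree]; omega)
      have hadj : ∀ x, G.Adj v x ↔ x = a ∨ x = b := fun x => by
        rw [← mem_neighborFinset, hN]
        simp
      rcases (hadj u).1 hu.1 with rfl | rfl
      · exact hred.not_isPendantPath u v b ⟨hab, hleaf hu.2 hu.1.symm, hadj⟩
      · exact hred.not_isPendantPath u v a
          ⟨hab.symm, hleaf hu.2 hu.1.symm, fun x => (hadj x).trans or_comm⟩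
  have hsum : ∑ v, (2 + l v) = ∑ v, (G.degree v + if G.degree v = 1 then 1 else 0) := by
    have hl : ∑ v, l v = ∑ v, if G.degree v = 1 then 1 else 0 := by
      have : ∀ v, l v = ∑ u, if G.degree u = 1 ∧ G.Adj v u then 1 else 0 := fun v => by
        rw [← Finset.card_filter]
        refine congrArg Finset.card ?_
        ext x
        simp [and_comm]
      simp_rw [this]
      rw [Finset.sum_comm]
      refine Finset.sum_congr rfl fun u _ => ?_
      split_ifs with h
      · refine Eq.trans ?_ h
        rw [← card_neighborFinset_eq_degree, ← Finset.card_filter]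
        refine congrArg Finset.card ?_
        ext x
        simp [h, adj_comm]
      · simp [h]
    have h2 := hG.2
    rw [← coe_edgeFinset, Set.ncard_coe_finset] at h2
    rw [Finset.sum_add_distrib, Finset.sum_add_distrib, sum_degrees_eq_twice_card_edges, hl, h2]
    simp [mul_comm]
  have heq := (Finset.sum_eq_sum_iff_of_le fun v _ => hbound v).1 hsum v (Finset.mem_univ v)
  rw [if_neg hv] at heq
  have := Finset.card_filter_add_card_filter_not (s := G.neighborFinset v) (G.degree · = 1)
  rw [card_neighborFinset_eq_degree] at this
  change l v + ((G.neighborFinset v).filter (G.degree · ≠ 1)).card = _ at this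
  omega

/-- A reduced unicyclic graph is a cycle with pendant vertices attached. -/
theorem IsUnicyclic.exists_cycleGraph_embedding [Fintype V] (hG : IsUnicyclic G)
    (hcard : 3 ≤ Fintype.card V) (hred : IsReducedGraph G) :
    ∃ r, 3 ≤ r ∧ ∃ f : cycleGraph r ↪g G,
      ∀ v, v ∉ Set.range f → ∃ i, ∀ x, G.Adj v x ↔ x = f i := by
  classical
  have h := hG.not_isAcyclic
  rw [isAcyclic_iff_free_cycleGraph] at h
  push Not at h
  obtain ⟨r, hr, hf⟩ := h
  obtain ⟨f⟩ := hf
  obtain ⟨r, rfl⟩ : ∃ s, r = s + 3 := ⟨r - 3, by omega⟩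
  have hsub : ∀ i, ((cycleGraph (r + 3)).neighborFinset i).map f.toEmbedding ⊆
      G.neighborFinset (f i) := by
    intro i x hx
    rw [Finset.mem_map] at hx
    obtain ⟨j, hj, rfl⟩ := hx
    rw [mem_neighborFinset] at hj ⊢
    exact f.toHom.map_adj hj
  have hcard2 : ∀ i, (((cycleGraph (r + 3)).neighborFinset i).map f.toEmbedding).card = 2 :=
    fun i => by rw [Finset.card_map, card_neighborFinset_eq_degree, cycleGraph_degree_three_le]
  have hdeg : ∀ i, G.degree (f i) ≠ 1 := fun i hi => by
    have := Finset.card_le_card (hsub i)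
    rw [hcard2, card_neighborFinset_eq_degree] at this
    omega
  have hN : ∀ i, ((cycleGraph (r + 3)).neighborFinset i).map f.toEmbedding =
      (G.neighborFinset (f i)).filter (G.degree · ≠ 1) := by
    intro i
    refine Finset.eq_of_subset_of_card_le (fun x hx => Finset.mem_filter.2 ⟨hsub i hx, ?_⟩) ?_
    · obtain ⟨j, -, rfl⟩ := Finset.mem_map.1 hx
      exact hdeg j
    · rw [hG.card_filter_neighborFinset hcard hred (hdeg i), hcard2]
  have hadj : ∀ i x, G.Adj (f i) x → G.degree x ≠ 1 →
      ∃ j, (cycleGraph (r + 3)).Adj i j ∧ f j = x := by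
    intro i x hx hx1
    have : x ∈ (G.neighborFinset (f i)).filter (G.degree · ≠ 1) :=
      Finset.mem_filter.2 ⟨(mem_neighborFinset _ _ _).2 hx, hx1⟩
    rw [← hN, Finset.mem_map] at this
    obtain ⟨j, hj, rfl⟩ := this
    exact ⟨j, (mem_neighborFinset _ _ _).1 hj, rfl⟩
  have hclosed : {v | v ∈ Set.range f ∨ ∃ i, ∀ x, G.Adj v x ↔ x = f i} = Set.univ := by
    refine hG.1.eq_univ_of_adj_closed (v := f 0) (Or.inl ⟨0, rfl⟩) ?_
    rintro x (⟨i, rfl⟩ | ⟨i, hi⟩) y hxy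
    · by_cases hy : G.degree y = 1
      · obtain ⟨z, hz, hz'⟩ := degree_eq_one_iff_existsUnique_adj.1 hy
        refine Or.inr ⟨i, fun x => ?_⟩
        rw [hz' _ hxy.symm]
        exact ⟨hz' x, fun h => h ▸ hz⟩
      · obtain ⟨j, -, rfl⟩ := hadj i y hxy hy
        exact Or.inl ⟨j, rfl⟩
    · exact Or.inl ⟨i, ((hi y).1 hxy).symm⟩
  refine ⟨r + 3, by omega, ⟨f.toEmbedding, ?_⟩, fun v hv => ?_⟩
  · intro i j
    refine ⟨fun h => ?_, fun h => f.toHom.map_adj h⟩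
    obtain ⟨k, hk, hkj⟩ := hadj i (f j) h (hdeg j)
    rwa [← f.injective hkj]
  · have : v ∈ {v | v ∈ Set.range f ∨ ∃ i, ∀ x, G.Adj v x ↔ x = f i} := hclosed ▸ Set.mem_univ v
    exact this.resolve_left hv

end ReducedGraph

section Sun

variable {G : SimpleGraph V}

theorem exists_embedding_graphUrtF {r t : ℕ} {m : Fin t → Fin r} (f : cycleGraph r ↪g G)
    {k : Fin t → V} (hk : k.Injective) (hkf : ∀ j, k j ∉ Set.range f)
    (hadj : ∀ j x, G.Adj (k j) x ↔ x = f (m j)) :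
    ∃ F : graphUrtF r t m ↪g G, Set.range F = Set.range f ∪ Set.range k := by
  have hne : ∀ i j, f i ≠ k j := fun i j h => hkf j ⟨i, h⟩
  refine ⟨⟨⟨Sum.elim f k, f.injective.sumElim hk hne⟩, ?_⟩, Set.Sum.elim_range _ _⟩
  rintro (i | i) (j | j)
  · simp
  · simp [G.adj_comm (f i), hadj, f.injective.eq_iff]
  · simp [hadj, f.injective.eq_iff]
  · simpa [hadj] using (hne _ _).symm

/-- Rotation of a cycle. -/
def cycleGraphRotate (r : ℕ) (i : Fin (r + 1)) : cycleGraph (r + 1) ≃g cycleGraph (r + 1) where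
  toEquiv := Equiv.addRight i
  map_rel_iff' := by
    rw [cycleGraph_eq_circulantGraph]
    exact circulantGraph_adj_translate

theorem nonempty_iso_of_embedding {H : SimpleGraph W} (f : H ↪g G) (hf : Set.range f = Set.univ) :
    Nonempty (G ≃g H) :=
  ⟨(RelIso.ofSurjective f (Set.range_eq_univ.1 hf)).symm⟩

theorem nonempty_iso_graphUrtF_three_one :
    Nonempty (graphUrtF 3 1 ![0] ≃g graphU 1 0 (Nat.zero_le 1)) := by
  let g : Fin 3 ⊕ Fin 1 → Unit ⊕ Fin 2 ⊕ Fin 1 ⊕ Fin 0 :=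
    Sum.elim ![.inl (), .inr (.inl 0), .inr (.inl 1)] (fun i => .inr (.inr (.inl i)))
  refine nonempty_iso_of_bijective (e := id) (f := g) Function.bijective_id (by decide) ?_
  rintro (i | i) (j | j) <;> fin_cases i <;> fin_cases j <;>
    simp [g, adj_comm _ (Sum.inr _) (Sum.inl _), cycleGraph_adj] <;> decide

variable [Fintype V] {r : ℕ}

/-- The extremal problem for a cycle with at most one pendant vertex at each cycle vertex. -/
theorem isPhiExtremal_of_cycleGraph_embedding {q : ℕ} (hcard : Fintype.card V = 2 * q + 4)
    (hr : 3 ≤ r) (f : cycleGraph r ↪g G) (a : {v // v ∉ Set.range f} → Fin r)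
    (ha : a.Injective) (hadj : ∀ (v : {v // v ∉ Set.range f}) x, G.Adj v x ↔ x = f (a v)) :
    q + 4 ≤ phi G ∧ (phi G = q + 4 → IsPhiExtremal q G) := by
  classical
  set t := Fintype.card {v // v ∉ Set.range f} with ht
  have htr : t ≤ r := Fintype.card_fin r ▸ Fintype.card_le_of_injective a ha
  have hrt : r + t = 2 * q + 4 := by
    have h1 := Set.ncard_add_ncard_compl (Set.range f)
    rw [← Set.image_univ, Set.ncard_image_of_injective _ f.injective, Set.ncard_univ,
      Set.image_univ, ← Nat.card_coe_set_eq, Nat.card_eq_fintype_card, Nat.card_eq_fintype_card,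
      Nat.card_eq_fintype_card, Fintype.card_fin, hcard] at h1
    rw [← h1, ht]
    rfl
  have hle := phi_le_of_embedding f
  have hfull : t = r → Nonempty (G ≃g graphUrtF r r id) := by
    intro h
    have hb : a.Bijective := (Fintype.bijective_iff_injective_and_card a).2
      ⟨ha, h.trans (Fintype.card_fin r).symm⟩
    let b := Equiv.ofBijective a hb
    obtain ⟨F, hF⟩ := exists_embedding_graphUrtF (m := id) f (k := fun j => (b.symm j).1)
      (Subtype.val_injective.comp b.symm.injective) (fun j => (b.symm j).2) fun j x => by
        rw [hadj]
        exact iff_of_eq (congrArg (x = f ·) (b.apply_symm_apply j))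
    refine nonempty_iso_of_embedding F (hF.trans (Set.eq_univ_of_forall fun x => ?_))
    by_cases hx : x ∈ Set.range f
    · exact Or.inl hx
    · exact Or.inr ⟨b ⟨x, hx⟩, congrArg Subtype.val (b.symm_apply_apply _)⟩
  obtain ⟨r, rfl⟩ : ∃ s, r = s + 3 := ⟨r - 3, by omega⟩
  have hsingle : ∀ v : {v // v ∉ Set.range f}, ∃ F : graphUrtF (r + 3) 1 ![0] ↪g G,
      Set.range F = insert v.1 (Set.range f) := by
    intro v
    have hrange : Set.range (f.comp (cycleGraphRotate _ (a v)).toEmbedding) = Set.range f :=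
      (cycleGraphRotate _ (a v)).surjective.range_comp f
    obtain ⟨F, hF⟩ := exists_embedding_graphUrtF (m := ![0])
      (f.comp (cycleGraphRotate _ (a v)).toEmbedding) (k := ![v.1])
      (Function.injective_of_subsingleton _) (by simpa [hrange] using v.2) (by
        rw [Fin.forall_fin_one]
        intro x
        rw [show f.comp (cycleGraphRotate _ (a v)).toEmbedding ((![0] : Fin 1 → _) 0) =
          f (0 + a v) from rfl, zero_add]
        exact hadj v x)
    refine ⟨F, hF.trans ?_⟩
    rw [hrange]
    simp
  have hone : t = 1 → Nonempty (G ≃g graphUrtF (r + 3) 1 ![0]) := by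
    intro h
    obtain ⟨v, hv⟩ := Fintype.card_eq_one_iff.1 h
    obtain ⟨F, hF⟩ := hsingle v
    refine nonempty_iso_of_embedding F (hF.trans (Set.eq_univ_of_forall fun x => ?_))
    by_cases hx : x ∈ Set.range f
    · exact Or.inr hx
    · exact Or.inl (congrArg Subtype.val (hv ⟨x, hx⟩))
  obtain h | rfl | rfl | rfl | rfl : 4 ≤ r ∨ r = 0 ∨ r = 1 ∨ r = 2 ∨ r = 3 := by omega
  · have := add_three_le_phi_cycleGraph (r + 3) (by omega)
    exact ⟨by omega, fun _ => by omega⟩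
  · obtain h1 | h3 : t = 1 ∨ t = 3 := by omega
    · obtain ⟨e⟩ := hone h1
      obtain rfl : q = 0 := by omega
      rw [phi_eq_of_iso e, phi_graphUrtF_three_one]
      obtain ⟨e'⟩ := nonempty_iso_graphUrtF_three_one
      exact ⟨le_rfl, fun _ => Or.inl ⟨e.trans e'⟩⟩
    · obtain ⟨e⟩ := hfull h3
      rw [phi_eq_of_iso e, phi_graphUrtF_three_three]
      exact ⟨by omega, fun _ => by omega⟩
  · rw [phi_cycleGraph_four] at hle
    obtain h4 | h4 : t = 4 ∨ t < 4 := by omega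
    · obtain ⟨e⟩ := hfull h4
      exact ⟨by omega, fun _ => Or.inr (Or.inr ⟨by omega, ⟨e⟩⟩)⟩
    · exact ⟨by omega, fun _ => by omega⟩
  · rw [phi_cycleGraph_five] at hle
    obtain h1 | h3 : t = 1 ∨ 3 ≤ t := by omega
    · obtain ⟨e⟩ := hone h1
      have hm : Fin.castLE (show 1 ≤ 5 by decide) = ![0] := by decide
      refine ⟨by omega, fun _ => Or.inr (Or.inl ⟨by omega, Or.inr ?_⟩)⟩
      rw [graphUrt, hm]
      exact ⟨e⟩
    · have hpair : ∀ s : Finset (Fin 5), 3 ≤ s.card → ∃ i ∈ s, i + 2 ∈ s := by decide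
      obtain ⟨i, hi, hi2⟩ := hpair (Finset.univ.image a) (by
        rwa [Finset.card_image_of_injective _ ha])
      obtain ⟨v, -, rfl⟩ := Finset.mem_image.1 hi
      obtain ⟨v', -, hv'⟩ := Finset.mem_image.1 hi2
      have hne : v.1 ≠ v'.1 := fun h => by
        rw [Subtype.ext h] at hv'
        simp at hv'
      have hrange : Set.range (f.comp (cycleGraphRotate _ (a v)).toEmbedding) = Set.range f :=
        (cycleGraphRotate _ (a v)).surjective.range_comp f
      obtain ⟨F, -⟩ := exists_embedding_graphUrtF (m := ![0, 2])
        (f.comp (cycleGraphRotate _ (a v)).toEmbedding) (k := ![v.1, v'.1]) (by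
          intro i j hij
          fin_cases i <;> fin_cases j
          · rfl
          · exact absurd hij hne
          · exact absurd hij.symm hne
          · rfl) (by
          rw [hrange, Fin.forall_fin_two]
          exact ⟨v.2, v'.2⟩) (by
          rw [Fin.forall_fin_two]
          refine ⟨fun x => (hadj v x).trans ?_, fun x => (hadj v' x).trans ?_⟩
          · rw [show f.comp (cycleGraphRotate _ (a v)).toEmbedding ((![0, 2] : Fin 2 → _) 0) =
              f (0 + a v) from rfl, zero_add]
          · rw [show f.comp (cycleGraphRotate _ (a v)).toEmbedding ((![0, 2] : Fin 2 → _) 1) =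
              f (2 + a v) from rfl, hv', add_comm (a v)])
      have := phi_le_of_embedding F
      rw [phi_graphUrtF_five_two] at this
      exact ⟨by omega, fun _ => by omega⟩
  · obtain h0 | h1 := Nat.eq_zero_or_pos t
    · have hempty := Fintype.card_eq_zero_iff.1 h0
      obtain ⟨e⟩ := nonempty_iso_of_embedding f (Set.eq_univ_of_forall fun x => by
        by_contra hx
        exact hempty.false ⟨x, hx⟩)
      rw [phi_eq_of_iso e, phi_cycleGraph_six]
      exact ⟨by omega, fun _ => Or.inr (Or.inl ⟨by omega, Or.inl ⟨e⟩⟩)⟩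
    · obtain ⟨v⟩ := Fintype.card_pos_iff.1 h1
      obtain ⟨F, -⟩ := hsingle v
      have := phi_le_of_embedding F
      rw [phi_graphUrtF_six_one] at this
      exact ⟨by omega, fun _ => by omega⟩

end Sun

theorem IsUnicyclic.isPhiExtremal_of_isReducedGraph [Fintype V] {G : SimpleGraph V}
    (hG : IsUnicyclic G) (hred : IsReducedGraph G) {q : ℕ}
    (hcard : Fintype.card V = 2 * q + 4) :
    q + 4 ≤ phi G ∧ (phi G = q + 4 → IsPhiExtremal q G) := by
  obtain ⟨r, hr, f, hf⟩ := hG.exists_cycleGraph_embedding (by omega) hred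
  choose a ha using hf
  refine isPhiExtremal_of_cycleGraph_embedding hcard hr f (fun v => a v.1 v.2) ?_
    fun v => ha v.1 v.2
  intro v v' h
  by_contra hne
  refine hred.not_isTwin v.1 v'.1 (f (a v.1 v.2)) ⟨fun h => hne (Subtype.ext h), ha _ _, ?_⟩
  intro x
  rw [ha _ v'.2]
  exact iff_of_eq (congrArg (x = f ·) h.symm)

theorem IsUnicyclic.three_le_card [Fintype V] {G : SimpleGraph V} (hG : IsUnicyclic G) :
    3 ≤ Fintype.card V := by
  classical
  have h := hG.not_isAcyclic
  rw [isAcyclic_iff_free_cycleGraph] at h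
  push Not at h
  obtain ⟨r, hr, ⟨f⟩⟩ := h
  have := Fintype.card_le_of_injective f f.injective
  rw [Fintype.card_fin] at this
  omega

/-- A unicyclic graph on `2 * q + 4` vertices has at least `q + 4` maximal dissociation sets, and
the graphs with exactly `q + 4` of them are known. -/
theorem IsUnicyclic.isPhiExtremal (q : ℕ) : ∀ {V : Type*} [Fintype V] {G : SimpleGraph V},
    IsUnicyclic G → Fintype.card V = 2 * q + 4 →
      q + 4 ≤ phi G ∧ (phi G = q + 4 → IsPhiExtremal q G) := by
  induction q with
  | zero =>
    intro V _ G hG hcard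
    by_cases hred : IsReducedGraph G
    · exact hG.isPhiExtremal_of_isReducedGraph hred hcard
    · obtain ⟨u, v, w, h⟩ := exists_isPendantPath_or_isTwin hred
      obtain ⟨U, _, H, f, hH, hU, -⟩ := hG.exists_embedding_of_isPendantPath_or_isTwin h
      have := hH.three_le_card
      omega
  | succ q ih =>
    intro V _ G hG hcard
    by_cases hred : IsReducedGraph G
    · exact hG.isPhiExtremal_of_isReducedGraph hred hcard
    · obtain ⟨u, v, w, h⟩ := exists_isPendantPath_or_isTwin hred
      obtain ⟨U, _, H, f, hH, hU, hrange, w, rfl⟩ :=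
        hG.exists_embedding_of_isPendantPath_or_isTwin h
      obtain ⟨hle, heq⟩ := ih hH (by omega)
      exact isPhiExtremal_succ_of_embedding h hrange hle heq

theorem phi_eq_iff_isPhiExtremal {q : ℕ} [Fintype V] {G : SimpleGraph V} (hG : IsUnicyclic G)
    (hcard : Fintype.card V = 2 * q + 4) : phi G = q + 4 ↔ IsPhiExtremal q G := by
  obtain ⟨hle, heq⟩ := hG.isPhiExtremal q hcard
  refine ⟨heq, fun h => hle.antisymm' ?_⟩
  rcases h with ⟨⟨e⟩⟩ | ⟨rfl, ⟨⟨e⟩⟩ | ⟨⟨e⟩⟩⟩ | ⟨rfl, ⟨e⟩⟩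
  · rw [phi_eq_of_iso e]
    exact phi_graphU_le (Nat.succ_pos q)
  · rw [phi_eq_of_iso e, phi_cycleGraph_six]
  · rw [phi_eq_of_iso e, graphUrt, phi_graphUrtF_five_one]
  · rw [phi_eq_of_iso e, graphUrt, phi_graphUrtF_four_four]

end DissociationSets

/-- for even `n ≥ 4`, a unicyclic graph `G` of order `n` satisfies
`phi G = ⌊n/2⌋ + 2` iff `G ≅ U((n-2)/2, (n-4)/2)`, or `n = 6` and `G` is isomorphic to
`U_{6,0} = C₆` or `U_{5,1}`, or `n = 8` and `G ≅ U_{4,4}`. -/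
theorem stmt2 {V : Type*} [Fintype V] (G : SimpleGraph V) (n : ℕ) (hn : 4 ≤ n) (heven : Even n)
    (hcard : Fintype.card V = n) (hG : IsUnicyclic G) :
    phi G = n / 2 + 2 ↔
      Nonempty (G ≃g graphU ((n - 2) / 2) ((n - 4) / 2) (by omega)) ∨
      (n = 6 ∧ (Nonempty (G ≃g cycleGraph 6) ∨ Nonempty (G ≃g graphUrt 5 1 (by omega)))) ∨
      (n = 8 ∧ Nonempty (G ≃g graphUrt 4 4 (by omega))) := by
  obtain ⟨q, rfl⟩ : ∃ q, n = 2 * q + 4 := by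
    obtain ⟨m, rfl⟩ := heven
    exact ⟨m - 2, by omega⟩
  have hU : ∀ {a b} (h : b ≤ a), a = q + 1 → b = q →
      (Nonempty (G ≃g graphU a b h) ↔ Nonempty (G ≃g graphU (q + 1) q (Nat.le_succ q))) := by
    rintro _ _ h rfl rfl
    rfl
  have h6 : 2 * q + 4 = 6 ↔ q = 1 := by omega
  have h8 : 2 * q + 4 = 8 ↔ q = 2 := by omega
  have hphi : (2 * q + 4) / 2 + 2 = q + 4 := by omega
  rw [h6, h8, hphi, hU (a := (2 * q + 4 - 2) / 2) (b := (2 * q + 4 - 4) / 2) (by omega)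
    (by omega) (by omega)]
  exact phi_eq_iff_isPhiExtremal hG hcard
end

section
/- For every n ≥ 3, the cycle satisfies φ(C_n) ≥ ⌊n/2⌋ + 2, with equality if and only if n = 3 or n = 6. -/
open SimpleGraph

/-- Local characterization of the dissociation sets of a cycle: no three consecutive vertices. -/
lemma isDissoc_cycleGraph_iff (m : ℕ) (S : Set (Fin (m + 3))) :
    IsDissoc (cycleGraph (m + 3)) S ↔ ∀ v ∈ S, ¬ (v - 1 ∈ S ∧ v + 1 ∈ S) := by
  have h2 : (1 + 1 : Fin (m + 3)) ≠ 0 := by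
    rw [Ne, Fin.ext_iff, Fin.val_add, Fin.val_one, Fin.val_zero, Nat.mod_eq_of_lt] <;> omega
  constructor
  · rintro h v hv ⟨ha, hb⟩
    have := h v hv (x := v - 1) ⟨ha, by simp [cycleGraph_adj]⟩ (y := v + 1)
      ⟨hb, by simp [cycleGraph_adj]⟩
    rw [sub_eq_iff_eq_add, add_assoc, left_eq_add] at this
    exact h2 this
  · rintro h v hv x ⟨hx, hvx⟩ y ⟨hy, hvy⟩
    have key := h v hv
    rw [cycleGraph_adj] at hvx hvy
    have hsub {z : Fin (m + 3)} (hz : v - z = 1) : z = v - 1 := by rw [← hz, sub_sub_cancel]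
    have hadd {z : Fin (m + 3)} (hz : z - v = 1) : z = v + 1 := by rw [← hz, add_sub_cancel]
    rcases hvx with hvx | hvx <;> rcases hvy with hvy | hvy
    · rw [hsub hvx, hsub hvy]
    · exact absurd ⟨hsub hvx ▸ hx, hadd hvy ▸ hy⟩ key
    · exact absurd ⟨hsub hvy ▸ hy, hadd hvx ▸ hx⟩ key
    · rw [hadd hvx, hadd hvy]

/-- A vertex set of a cycle is a maximal dissociation set iff it contains no three consecutive
vertices, but adding any further vertex creates three consecutive ones. -/
lemma isMaxDissoc_cycleGraph_iff (m : ℕ) (S : Set (Fin (m + 3))) :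
    IsMaxDissoc (cycleGraph (m + 3)) S ↔
      (∀ v ∈ S, ¬ (v - 1 ∈ S ∧ v + 1 ∈ S)) ∧
      ∀ v ∉ S, (v - 1 ∈ S ∧ v + 1 ∈ S) ∨ (v - 1 ∈ S ∧ v - 1 - 1 ∈ S) ∨
        (v + 1 ∈ S ∧ v + 1 + 1 ∈ S) := by
  simp only [IsMaxDissoc, isDissoc_cycleGraph_iff]
  refine and_congr_right fun hS => ⟨fun hmax v hv => ?_, fun hM T hT hST => ?_⟩
  · by_contra! hcon
    have hins := hmax (insert v S) ?_ (Set.subset_insert v S)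
    · exact hv (hins ▸ Set.mem_insert v S)
    · have h1 : (1 : Fin (m + 3)) ≠ 0 := by simp
      have hp : v + 1 ≠ v := fun h => h1 (add_eq_left.1 h)
      have hm : v - 1 ≠ v := fun h => h1 (sub_eq_self.1 h)
      rintro w (rfl | hw) ⟨ha, hb⟩
      · exact hcon.1 (ha.resolve_left hm) (hb.resolve_left hp)
      · rcases ha with ha | ha
        · obtain rfl : w = v + 1 := sub_eq_iff_eq_add.1 ha
          rcases hb with hb | hb
          · have hw' : v - 1 = v + 1 := sub_eq_iff_eq_add.2 hb.symm
            exact hcon.1 (hw' ▸ hw) hw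
          · exact hcon.2.2 hw hb
        · rcases hb with hb | hb
          · obtain rfl : w = v - 1 := eq_sub_of_add_eq hb
            exact hcon.2.1 hw ha
          · exact hS w hw ⟨ha, hb⟩
  · refine hST.antisymm fun v hvT => ?_
    by_contra hv
    rcases hM v hv with ⟨ha, hb⟩ | ⟨ha, hb⟩ | ⟨ha, hb⟩
    · exact hT v hvT ⟨hST ha, hST hb⟩
    · exact hT (v - 1) (hST ha) ⟨hST hb, by simpa using hvT⟩
    · exact hT (v + 1) (hST ha) ⟨by simpa using hvT, hST hb⟩

/-- A computable form of `phi` for small cycles. -/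
lemma phi_cycleGraph_eq_card (m : ℕ) :
    phi (cycleGraph (m + 3)) = (Finset.univ.filter fun S : Finset (Fin (m + 3)) =>
      (∀ v ∈ S, ¬ (v - 1 ∈ S ∧ v + 1 ∈ S)) ∧
      ∀ v ∉ S, (v - 1 ∈ S ∧ v + 1 ∈ S) ∨ (v - 1 ∈ S ∧ v - 1 - 1 ∈ S) ∨
        (v + 1 ∈ S ∧ v + 1 + 1 ∈ S)).card := by
  classical
  rw [phi, ← Set.ncard_coe_finset,
    ← Set.ncard_image_of_injective _ (Finset.coe_injective (α := Fin (m + 3)))]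
  congr 1
  ext S
  simp only [Set.mem_ofPred_eq, isMaxDissoc_cycleGraph_iff, Finset.coe_filter, Finset.mem_univ,
    true_and, Set.mem_image]
  constructor
  · intro h
    exact ⟨S.toFinite.toFinset, by simpa using h, by simp⟩
  · rintro ⟨T, hT, rfl⟩
    simpa using hT

lemma IsMaxDissoc.rotate {m : ℕ} {S : Set (Fin (m + 3))}
    (hS : IsMaxDissoc (cycleGraph (m + 3)) S) (k : Fin (m + 3)) :
    IsMaxDissoc (cycleGraph (m + 3)) {v | v - k ∈ S} := by
  rw [isMaxDissoc_cycleGraph_iff] at hS ⊢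
  have hs (v : Fin (m + 3)) : v - 1 - k = v - k - 1 := sub_right_comm v 1 k
  have ha (v : Fin (m + 3)) : v + 1 - k = v - k + 1 := add_sub_right_comm v 1 k
  simp only [Set.mem_ofPred_eq, hs, ha]
  exact ⟨fun v => hS.1 (v - k), fun v => hS.2 (v - k)⟩

/-- A maximal dissociation set of a cycle without rotational symmetry has a full orbit. -/
lemma IsMaxDissoc.le_phi {m : ℕ} {S : Set (Fin (m + 3))}
    (hS : IsMaxDissoc (cycleGraph (m + 3)) S)
    (haper : ∀ k, (∀ v, v ∈ S ↔ v + k ∈ S) → k = 0) :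
    m + 3 ≤ phi (cycleGraph (m + 3)) := by
  have hinj : Function.Injective fun k : Fin (m + 3) => {v | v - k ∈ S} := by
    intro k l hkl
    refine sub_eq_zero.1 (haper (k - l) fun v => ?_)
    have := Set.ext_iff.1 hkl (v + k)
    simpa [add_sub_assoc] using this
  calc m + 3 = (Set.range fun k : Fin (m + 3) => {v | v - k ∈ S}).ncard := by
        rw [← Set.image_univ, Set.ncard_image_of_injective _ hinj]
        simp
    _ ≤ phi (cycleGraph (m + 3)) := by
        refine Set.ncard_le_ncard ?_ (Set.toFinite _)
        rintro _ ⟨k, rfl⟩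
        exact hS.rotate k

lemma Fin.val_add_one_eq_ite {m : ℕ} (v : Fin (m + 3)) :
    (v + 1).val = if v.val = m + 2 then 0 else v.val + 1 := by
  have := v.isLt
  rw [Fin.val_add_eq_ite, Fin.val_one]
  split_ifs <;> omega

lemma Fin.val_sub_one_eq_ite {m : ℕ} (v : Fin (m + 3)) :
    (v - 1).val = if v.val = 0 then m + 2 else v.val - 1 := by
  have h := Fin.val_add_one_eq_ite (v - 1)
  have := (v - 1).isLt
  have := v.isLt
  rw [sub_add_cancel] at h
  split_ifs at h ⊢ <;> omega

/-- The pattern `110 ⋯ 110 10` or `110 ⋯ 110 0` when `3` does not divide the length. -/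
lemma le_phi_cycleGraph_of_mod_ne {m : ℕ} (hm : 2 ≤ m) (hmod : m % 3 ≠ 0) :
    m + 3 ≤ phi (cycleGraph (m + 3)) := by
  have hS : IsMaxDissoc (cycleGraph (m + 3))
      {v : Fin (m + 3) | v.val % 3 ≠ 2 ∧ v.val ≠ m + 2} := by
    rw [isMaxDissoc_cycleGraph_iff]
    simp only [Set.mem_ofPred_eq, Fin.val_add_one_eq_ite, Fin.val_sub_one_eq_ite]
    refine ⟨fun v => ?_, fun v => ?_⟩ <;> have := v.isLt <;> split_ifs <;> omega
  refine hS.le_phi fun k hk => ?_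
  have h0 := hk ⟨m, by omega⟩
  have h1 := hk ⟨m + 1, by omega⟩
  have h2 := hk ⟨m + 2, by omega⟩
  have := k.isLt
  simp only [Set.mem_ofPred_eq, Fin.val_add_eq_ite] at h0 h1 h2
  rw [Fin.ext_iff, Fin.val_zero]
  split_ifs at h0 h1 h2 <;> omega

/-- The pattern `110 ⋯ 110 10 1100` when `3` divides the length. -/
lemma le_phi_cycleGraph_of_mod_eq {m : ℕ} (hm : 6 ≤ m) (hmod : m % 3 = 0) :
    m + 3 ≤ phi (cycleGraph (m + 3)) := by
  have hS : IsMaxDissoc (cycleGraph (m + 3))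
      {v : Fin (m + 3) | (v.val % 3 ≠ 2 ∧ v.val + 2 ≠ m ∧ v.val ≠ m + 1) ∨ v.val + 1 = m} := by
    rw [isMaxDissoc_cycleGraph_iff]
    simp only [Set.mem_ofPred_eq, Fin.val_add_one_eq_ite, Fin.val_sub_one_eq_ite]
    refine ⟨fun v => ?_, fun v => ?_⟩ <;> have := v.isLt <;> split_ifs <;> omega
  refine hS.le_phi fun k hk => ?_
  have h1 := hk ⟨m + 1, by omega⟩
  have h2 := hk ⟨m + 2, by omega⟩
  have := k.isLt
  simp only [Set.mem_ofPred_eq, Fin.val_add_eq_ite] at h1 h2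
  rw [Fin.ext_iff, Fin.val_zero]
  split_ifs at h1 h2 <;> omega

/-- for `n ≥ 3`, `φ(C_n) ≥ ⌊n/2⌋ + 2`, with equality iff `n = 3` or `n = 6`. -/
theorem stmt13 (n : ℕ) (hn : 3 ≤ n) :
    n / 2 + 2 ≤ phi (cycleGraph n) ∧
      (phi (cycleGraph n) = n / 2 + 2 ↔ n = 3 ∨ n = 6) := by
  obtain ⟨m, rfl⟩ := Nat.exists_eq_add_of_le' hn
  obtain rfl | rfl | rfl | ⟨h2, h3⟩ : m = 0 ∨ m = 1 ∨ m = 3 ∨ 2 ≤ m ∧ m ≠ 3 := by omega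
  · have : phi (cycleGraph (0 + 3)) = 3 := by rw [phi_cycleGraph_eq_card]; decide
    omega
  · have : phi (cycleGraph (1 + 3)) = 6 := by rw [phi_cycleGraph_eq_card]; decide
    omega
  · have : phi (cycleGraph (3 + 3)) = 5 := by rw [phi_cycleGraph_eq_card]; decide +kernel
    omega
  · have : m + 3 ≤ phi (cycleGraph (m + 3)) := by
      by_cases hmod : m % 3 = 0
      · exact le_phi_cycleGraph_of_mod_eq (by omega) hmod
      · exact le_phi_cycleGraph_of_mod_ne h2 hmod
    omega
end
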